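/- arXiv:0907.2730 — 2 statements merged into one kernel-verified Lean document; each statement's English description precedes it below -/
import Mathlib

section
/- Let Γ₂ be the balloon graph with 2 balloons. Then the 2-strand braid group B₂(Γ₂) = π₁(UC²(Γ₂)) (at any basepoint) is isomorphic to the free product (coproduct of groups) of the free group on three generators, FreeGroup (Fin 3), with the free abelian group ℤ² (i.e., Multiplicative (ℤ × ℤ)). -/
/-- The ordered configuration space of `n` points on `X`. -/
abbrev Conf (n : ℕ) (X : Type*) [TopologicalSpace X] : Type _ :=
  {f : Fin n → X // Function.Injective f}

/-- Two configurations are equivalent iff they differ by a permutation of coordinates. -/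
def confSetoid (n : ℕ) (X : Type*) [TopologicalSpace X] : Setoid (Conf n X) where
  r f g := ∃ σ : Equiv.Perm (Fin n), (f : Fin n → X) = (g : Fin n → X) ∘ σ
  iseqv := by
    refine ⟨fun f => ⟨Equiv.refl _, rfl⟩, ?_, ?_⟩
    · rintro f g ⟨σ, h⟩
      exact ⟨σ.symm, funext fun x => by simp [h, Function.comp]⟩
    · rintro f g h ⟨σ, hfg⟩ ⟨τ, hgh⟩
      exact ⟨σ.trans τ, funext fun x => by simp [hfg, hgh, Function.comp]⟩

/-- The unordered configuration space of `n` points on `X`, with the quotient topology. -/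
abbrev UConf (n : ℕ) (X : Type*) [TopologicalSpace X] : Type _ :=
  Quotient (confSetoid n X)


/-- The balloon graph with `m` balloons, as a subset of `ℝ²`: a stem from `(0,-1)` to
`(0,0)`, segments from `(0,0)` to `(i,1)` for `i = 1, …, m`, and circles of radius `1/4`
centered at `(i, 5/4)` for `i = 1, …, m`. -/
def balloonGraph (m : ℕ) : Set (ℝ × ℝ) :=
  segment ℝ ((0 : ℝ), (-1 : ℝ)) ((0 : ℝ), (0 : ℝ)) ∪
    (⋃ i ∈ Finset.Icc 1 m, segment ℝ ((0 : ℝ), (0 : ℝ)) ((i : ℝ), (1 : ℝ))) ∪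
    (⋃ i ∈ Finset.Icc 1 m,
      {p : ℝ × ℝ | (p.1 - (i : ℝ)) ^ 2 + (p.2 - 5 / 4) ^ 2 = (1 / 4 : ℝ) ^ 2})

/-!
Give the points of `Γ₂` heights: one balloon hangs down from the lower end of the path joining the
two balloons, the other stands on its upper end, and the stem rises from the midpoint more slowly
than the path. A pair of points of distinct heights is ordered by height, and pulling its lower
point onto the lower balloon, then pushing its higher point onto the upper one, deforms the space of
such pairs onto a torus, whose fundamental group is `ℤ²`.

Points of equal height lie on one of three pairs of arcs: the stem and the path, or the two sides of
one of the balloons. The pairs of points on two paired arcs form a simply connected handle; those of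
distinct heights form its two ends, according to which arc carries the lower point, and the ends are
simply connected too. By the Seifert–van Kampen theorem each of the three handles contributes a free
generator.

The base space and the handles intersect in disconnected sets, so van Kampen is applied to
groupoids, in the form that functors from fundamental groupoids to a group glue along open covers.
On a contractible domain the functors to be glued are locally coboundaries, and the discrepancies
of their local potentials define a covering space, which has a section.
-/

open Set Filter Topology unitInterval

section Holonomy

theorem mul_inv_eq_mul_inv_iff_inv_mul_eq_inv_mul {G : Type*} [Group G] {a b c d : G} :
    a * b⁻¹ = c * d⁻¹ ↔ a⁻¹ * c = b⁻¹ * d := by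
  rw [eq_mul_inv_iff_mul_eq, inv_mul_eq_iff_eq_mul, mul_assoc, eq_comm]

variable {X K L G H : Type*} [TopologicalSpace X] [TopologicalSpace K] [TopologicalSpace L]
  [Group G] [Group H]

/-- A holonomy on `X` with values in `G`: a functor from the fundamental groupoid of `X` to `G`.
The order of the product in `map_trans` is the one of `FundamentalGroup.mul_def`. -/
@[ext]
structure Holonomy (X G : Type*) [TopologicalSpace X] [Group G] where
  /-- The value of the holonomy on a homotopy class of paths. -/
  toFun : ∀ {x y : X}, Path.Homotopic.Quotient x y → G
  map_trans : ∀ {x y z : X} (α : Path.Homotopic.Quotient x y) (β : Path.Homotopic.Quotient y z),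
    toFun (α.trans β) = toFun β * toFun α

namespace Holonomy

instance : CoeFun (Holonomy X G) fun _ => ∀ {x y : X}, Path.Homotopic.Quotient x y → G := ⟨toFun⟩

theorem map_refl (f : Holonomy X G) (x : X) : f (.refl x) = 1 := by
  simpa [Path.Homotopic.Quotient.refl_trans] using f.map_trans (.refl x) (.refl x)

theorem map_symm (f : Holonomy X G) {x y : X} (α : Path.Homotopic.Quotient x y) :
    f α.symm = (f α)⁻¹ := by
  rw [eq_inv_iff_mul_eq_one, ← f.map_trans, Path.Homotopic.Quotient.trans_symm, f.map_refl]

/-- The pullback of a holonomy along a continuous map. -/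
def comap (f : Holonomy X G) (g : C(K, X)) : Holonomy K G where
  toFun α := f (α.map g)
  map_trans α β := by
    induction α using Path.Homotopic.Quotient.ind
    induction β using Path.Homotopic.Quotient.ind
    simp only [← Path.Homotopic.Quotient.mk_trans, ← Path.Homotopic.Quotient.mk_map,
      Path.map_trans]
    rw [Path.Homotopic.Quotient.mk_trans, f.map_trans]

/-- The restriction of a holonomy to a subspace. -/
def restrict (f : Holonomy X G) (U : Set X) : Holonomy U G :=
  f.comap ⟨Subtype.val, continuous_subtype_val⟩

/-- The image of a holonomy under a group homomorphism. -/
def map (f : Holonomy X G) (φ : G →* H) : Holonomy X H where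
  toFun α := φ (f α)
  map_trans α β := by rw [f.map_trans, map_mul]

/-- The holonomy whose value on a path is the quotient of the values of `s` at its ends. -/
def coboundary (s : X → G) : Holonomy X G where
  toFun {x y} _ := s y * (s x)⁻¹
  map_trans _ _ := by group

/-- The holonomy with values in `π₁(X, b)` that closes up each path with the base paths `β`. -/
noncomputable def ofBasePaths {b : X} (β : ∀ x, Path.Homotopic.Quotient b x) :
    Holonomy X (FundamentalGroup X b) where
  toFun {x y} α := ((β x).trans α).trans (β y).symm
  map_trans {x y z} α α' := by
    change _ = (((β x).trans α).trans (β y).symm).trans (((β y).trans α').trans (β z).symm)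
    simp only [Path.Homotopic.Quotient.trans_assoc]
    rw [← Path.Homotopic.Quotient.trans_assoc (β y).symm, Path.Homotopic.Quotient.symm_trans,
      Path.Homotopic.Quotient.refl_trans]

/-- The homomorphism given by the values of a holonomy on loops. -/
def toMonoidHom (f : Holonomy X G) (b : X) : FundamentalGroup X b →* G where
  toFun α := f α
  map_one' := f.map_refl b
  map_mul' α β := f.map_trans β α

theorem comap_comp (f : Holonomy X G) (g : C(K, X)) (h : C(L, K)) :
    f.comap (g.comp h) = (f.comap g).comap h := by
  ext x y α
  exact congrArg f.toFun (Path.Homotopic.Quotient.map_comp ..)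

theorem eq_coboundary [SimplyConnectedSpace X] (f : Holonomy X G) :
    ∃ s : X → G, f = coboundary s := by
  obtain ⟨b⟩ : Nonempty X := inferInstance
  let β (x : X) : Path.Homotopic.Quotient b x := .mk (PathConnectedSpace.somePath b x)
  refine ⟨fun x => f (β x), ?_⟩
  ext x y α
  change f α = f (β y) * (f (β x))⁻¹
  rw [eq_mul_inv_iff_mul_eq, ← f.map_trans, Subsingleton.elim ((β x).trans α) (β y)]

theorem restrict_comap (f : Holonomy X G) (g : C(K, X)) (U : Set X) :
    (f.comap g).restrict (g ⁻¹' U) = (f.restrict U).comap (g.restrictPreimage U) := by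
  simp only [restrict, ← comap_comp]
  rfl

theorem exists_restrict_eq_coboundary {U : Set X} (hU : IsSimplyConnected U) (f : Holonomy U G) :
    ∃ s : X → G, f = (coboundary s).restrict U := by
  have := hU.simplyConnectedSpace
  obtain ⟨s, hs⟩ := f.eq_coboundary
  refine ⟨Function.extend Subtype.val s 1, ?_⟩
  ext x y α
  change f α = Function.extend Subtype.val s 1 y * (Function.extend Subtype.val s 1 x)⁻¹
  simp only [Subtype.val_injective.extend_apply, hs]
  rfl

theorem exists_restrict_coboundary_eq_iff [LocallyPathConnectedSpace X] {s s' : X → G} {x : X} :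
    (∃ U ∈ 𝓝 x, (coboundary s).restrict U = (coboundary s').restrict U) ↔
      ∀ᶠ y in 𝓝 x, (s y)⁻¹ * s' y = (s x)⁻¹ * s' x := by
  constructor
  · rintro ⟨U, hU, hs⟩
    filter_upwards [pathComponentIn_mem_nhds hU] with y ⟨γ, hγ⟩
    let α : Path (⟨x, mem_of_mem_nhds hU⟩ : U) ⟨y, γ.target ▸ hγ 1⟩ :=
      ⟨⟨fun t => ⟨γ t, hγ t⟩, by fun_prop⟩, by simp, by simp⟩
    exact mul_inv_eq_mul_inv_iff_inv_mul_eq_inv_mul.1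
      (congrArg (fun f => f.toFun (.mk α)) hs :)
  · intro h
    refine ⟨_, h, ?_⟩
    ext y z -
    exact mul_inv_eq_mul_inv_iff_inv_mul_eq_inv_mul.2 (z.2.trans y.2.symm)

instance : SimplyConnectedSpace I :=
  have : ContractibleSpace I := (convex_Icc (0 : ℝ) 1).contractibleSpace ⟨0, by simp⟩
  inferInstance

instance : LocallyPathConnectedSpace I := (convex_Icc (0 : ℝ) 1).locallyPathConnectedSpace

theorem ext_of_forall_nhds {f f' : Holonomy X G}
    (h : ∀ x, ∃ U ∈ 𝓝 x, f.restrict U = f'.restrict U) : f = f' := by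
  ext x y α
  induction α using Path.Homotopic.Quotient.ind with | mk γ
  obtain ⟨g, rfl, rfl⟩ := γ
  obtain ⟨s, hs⟩ := (f.comap g).eq_coboundary
  obtain ⟨s', hs'⟩ := (f'.comap g).eq_coboundary
  have hconst : IsLocallyConstant fun t => (s t)⁻¹ * s' t := by
    refine (IsLocallyConstant.iff_eventually_eq _).2 fun t => ?_
    obtain ⟨U, hU, hf⟩ := h (g t)
    refine exists_restrict_coboundary_eq_iff.1 ⟨g ⁻¹' U, g.continuous.continuousAt hU, ?_⟩
    rw [← hs, ← hs', restrict_comap, restrict_comap, hf]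
  have key : s 1 * (s 0)⁻¹ = s' 1 * (s' 0)⁻¹ :=
    mul_inv_eq_mul_inv_iff_inv_mul_eq_inv_mul.2 (hconst.apply_eq_of_preconnectedSpace 1 0)
  let ε : Path (0 : I) 1 := ⟨.id I, rfl, rfl⟩
  calc
    f.comap g (.mk ε) = s 1 * (s 0)⁻¹ := by rw [hs]; rfl
    _ = s' 1 * (s' 0)⁻¹ := key
    _ = f'.comap g (.mk ε) := by rw [hs']; rfl

end Holonomy
end Holonomy

section Cocycle

variable {ι K G : Type*} [TopologicalSpace K] [Group G]

/-- The principal `G`-bundle with discrete fibre whose local trivializations over the sets `U i`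
differ by the locally constant functions `(κ j)⁻¹ * κ i`. -/
def cocycleBundle [TopologicalSpace G] [DiscreteTopology G] {U : ι → Set K}
    (hU : ∀ i, IsOpen (U i)) {idx : K → ι} (hidx : ∀ x, x ∈ U (idx x)) {κ : ι → K → G}
    (hκ : ∀ i j, ∀ x ∈ U i ∩ U j, ∀ᶠ y in 𝓝 x, (κ j y)⁻¹ * κ i y = (κ j x)⁻¹ * κ i x) :
    FiberBundleCore ι K G where
  baseSet := U
  isOpen_baseSet := hU
  indexAt := idx
  mem_baseSet_at := hidx
  coordChange i j x v := (κ j x)⁻¹ * κ i x * v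
  coordChange_self i x _ v := by simp
  continuousOn_coordChange i j := by
    rintro ⟨x, v⟩ ⟨hx, -⟩
    have hcont : Continuous fun q : K × G => (κ j x)⁻¹ * κ i x * q.2 :=
      (continuous_of_discreteTopology (f := ((κ j x)⁻¹ * κ i x * ·))).comp continuous_snd
    refine (hcont.continuousAt.congr ?_).continuousWithinAt
    filter_upwards [continuousAt_fst.eventually (hκ i j x hx)] with q hq
    rw [hq]
  coordChange_comp i j k x _ v := by group

theorem exists_eventually_inv_mul_eq [SimplyConnectedSpace K] [LocallyPathConnectedSpace K]
    {U : ι → Set K} (hU : ∀ i, IsOpen (U i)) (hcover : ∀ x, ∃ i, x ∈ U i) {κ : ι → K → G}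
    (hκ : ∀ i j, ∀ x ∈ U i ∩ U j, ∀ᶠ y in 𝓝 x, (κ j y)⁻¹ * κ i y = (κ j x)⁻¹ * κ i x) :
    ∃ s : K → G, ∀ i, ∀ x ∈ U i, ∀ᶠ y in 𝓝 x, (κ i y)⁻¹ * s y = (κ i x)⁻¹ * s x := by
  let _ : TopologicalSpace G := ⊥
  have : DiscreteTopology G := ⟨rfl⟩
  choose idx hidx using hcover
  let Z := cocycleBundle hU hidx hκ
  have hcov : IsCoveringMap Z.proj :=
    IsFiberBundle.isCoveringMap fun x => ⟨Z.localTriv (idx x), hidx x⟩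
  obtain ⟨b⟩ : Nonempty K := inferInstance
  obtain ⟨F, ⟨-, hF⟩, -⟩ := hcov.existsUnique_continuousMap_lifts (.id K) b ⟨b, (1 : G)⟩ rfl
  have hproj (y : K) : (F y).1 = y := congrFun hF y
  let s (y : K) : G := κ (idx (F y).1) (F y).1 * (show G from (F y).2)
  have hval (i : ι) (y : K) : (Z.localTriv i (F y)).2 = (κ i y)⁻¹ * s y := by
    rw [← congrArg (κ i) (hproj y)]
    exact mul_assoc (κ i (F y).1)⁻¹ _ _
  refine ⟨s, fun i x hx => ?_⟩
  have hcont : ContinuousAt (fun y => (Z.localTriv i (F y)).2) x := by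
    refine ContinuousAt.snd (ContinuousAt.comp ?_ F.continuous.continuousAt)
    refine (Z.localTriv i).continuousAt ?_
    rw [FiberBundleCore.mem_localTriv_source, hproj]
    exact hx
  simp only [hval] at hcont
  exact hcont.eventually ((isOpen_discrete {_}).mem_nhds rfl)

end Cocycle

section Gluing

variable {ι X K L A G : Type*} [TopologicalSpace X] [TopologicalSpace K] [TopologicalSpace L]
  [TopologicalSpace A] [Group G] {U : ι → Set X} {φ : ∀ i, Holonomy (U i) G}

namespace Holonomy

/-- Holonomies on the members of a cover are compatible if they agree on pairwise
intersections. -/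
def Compatible (φ : ∀ i, Holonomy (U i) G) : Prop :=
  ∀ i j, (φ i).comap (.inclusion inter_subset_left : C(↥(U i ∩ U j), U i)) =
    (φ j).comap (.inclusion inter_subset_right)

theorem Compatible.comap_eq (hφ : Compatible φ) {i j : ι} {g : C(A, U i)} {g' : C(A, U j)}
    (h : ∀ a, (g a : X) = g' a) : (φ i).comap g = (φ j).comap g' := by
  let k : C(A, ↥(U i ∩ U j)) := ⟨fun a => ⟨g a, (g a).2, h a ▸ (g' a).2⟩, by fun_prop⟩
  have hg' : g' = (ContinuousMap.inclusion inter_subset_right).comp k :=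
    ContinuousMap.ext fun a => Subtype.ext (h a).symm
  rw [hg', comap_comp, ← hφ i j, ← comap_comp]
  rfl

/-- A potential along `F : C(K, X)` of holonomies `φ i` on the sets `U i`: a function on `K` whose
coboundary is locally the pullback of the `φ i`. -/
def IsPotential (φ : ∀ i, Holonomy (U i) G) (F : C(K, X)) (s : K → G) : Prop :=
  ∀ i, (φ i).comap (F.restrictPreimage (U i)) = (coboundary s).restrict (F ⁻¹' U i)

theorem IsPotential.comp {F : C(K, X)} {s : K → G} (hs : IsPotential φ F s) (g : C(L, K)) :
    IsPotential φ (F.comp g) (s ∘ g) := by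
  intro i
  change (φ i).comap ((F.restrictPreimage (U i)).comp (g.restrictPreimage (F ⁻¹' U i))) = _
  rw [comap_comp, hs i]
  rfl

theorem IsPotential.coboundary_eq {F : C(K, X)} {s s' : K → G} (hs : IsPotential φ F s)
    (hs' : IsPotential φ F s') (hU : ∀ i, IsOpen (U i)) (hcover : ∀ x, ∃ i, x ∈ U i) :
    coboundary s = coboundary s' := by
  refine ext_of_forall_nhds fun x => ?_
  obtain ⟨i, hi⟩ := hcover (F x)
  exact ⟨F ⁻¹' U i, ((hU i).preimage F.continuous).mem_nhds hi, (hs i).symm.trans (hs' i)⟩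

variable (hU : ∀ i, IsOpen (U i)) (hcover : ∀ x, ∃ i, x ∈ U i) (hφ : Compatible φ)
include hU hcover hφ

theorem exists_isPotential {E : Type*} [NormedAddCommGroup E] [NormedSpace ℝ E] (F : C(E, X)) :
    ∃ s, IsPotential φ F s := by
  choose i hi using fun z => hcover (F z)
  choose r hr hball using fun z => Metric.isOpen_iff.1 ((hU (i z)).preimage F.continuous) z (hi z)
  let W (z : E) : Set E := Metric.ball z (r z)
  let g (z : E) : C(W z, U (i z)) := (F.restrictPreimage (U (i z))).comp (.inclusion (hball z))
  have hW (z : E) : IsSimplyConnected (W z) :=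
    have : ContractibleSpace (W z) :=
      (convex_ball z (r z)).contractibleSpace ⟨z, Metric.mem_ball_self (hr z)⟩
    SimplyConnectedSpace.ofContractible _
  choose κ hκ using fun z => exists_restrict_eq_coboundary (hW z) ((φ (i z)).comap (g z))
  obtain ⟨s, hs⟩ : ∃ s : E → G, ∀ z, ∀ x ∈ W z,
      ∀ᶠ y in 𝓝 x, (κ z y)⁻¹ * s y = (κ z x)⁻¹ * s x := by
    refine exists_eventually_inv_mul_eq (fun z => Metric.isOpen_ball)
      (fun z => ⟨z, Metric.mem_ball_self (hr z)⟩) fun z z' x hx => ?_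
    refine exists_restrict_coboundary_eq_iff.1
      ⟨_, (Metric.isOpen_ball.inter Metric.isOpen_ball).mem_nhds hx, ?_⟩
    have hcompat : ((φ (i z')).comap (g z')).comap (.inclusion inter_subset_right) =
        ((φ (i z)).comap (g z)).comap (.inclusion (inter_subset_left : W z ∩ W z' ⊆ W z)) := by
      simp only [← comap_comp]
      exact hφ.comap_eq fun a => rfl
    rwa [hκ, hκ] at hcompat
  refine ⟨s, fun j => ext_of_forall_nhds fun x => ?_⟩
  obtain ⟨V, hV, hsV⟩ := exists_restrict_coboundary_eq_iff.2
    (hs x x (Metric.mem_ball_self (hr x)))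
  have hVW : V ∩ W x ∈ 𝓝 (x : E) := inter_mem hV (Metric.ball_mem_nhds _ (hr x))
  refine ⟨_, continuous_subtype_val.continuousAt hVW, ?_⟩
  let a : C(↥((↑) ⁻¹' (V ∩ W x) : Set (F ⁻¹' U j)), V) := ⟨fun y => ⟨y, y.2.1⟩, by fun_prop⟩
  let b : C(↥((↑) ⁻¹' (V ∩ W x) : Set (F ⁻¹' U j)), W x) := ⟨fun y => ⟨y, y.2.2⟩, by fun_prop⟩
  calc
    _ = ((φ (i x)).comap (g x)).comap b := by
      simp only [restrict, ← comap_comp]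
      exact hφ.comap_eq fun a => rfl
    _ = ((coboundary (κ x)).restrict V).comap a := by rw [hκ]; rfl
    _ = ((coboundary s).restrict V).comap a := by rw [hsV]

theorem exists_isPotential_of_retract {E : Type*} [NormedAddCommGroup E] [NormedSpace ℝ E]
    {e : C(K, E)} {r : C(E, K)} (h : r.comp e = .id K) (F : C(K, X)) :
    ∃ s, IsPotential φ F s := by
  obtain ⟨s, hs⟩ := exists_isPotential hU hcover hφ (F.comp r)
  refine ⟨s ∘ e, ?_⟩
  simpa only [ContinuousMap.comp_assoc, h, ContinuousMap.comp_id] using hs.comp e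

end Holonomy
end Gluing

section Transport

variable {ι X G : Type*} [TopologicalSpace X] [Group G] {U : ι → Set X} {φ : ∀ i, Holonomy (U i) G}

namespace Holonomy

/-- The variation of a potential along `g`, which is the value on `g` of the holonomy glued from
the `φ i`. -/
noncomputable def transport (φ : ∀ i, Holonomy (U i) G) (g : C(I, X)) : G :=
  let s := Classical.epsilon (IsPotential φ g)
  s 1 * (s 0)⁻¹

variable (hU : ∀ i, IsOpen (U i)) (hcover : ∀ x, ∃ i, x ∈ U i)
include hU hcover

theorem IsPotential.transport_eq {g : C(I, X)} {s : I → G} (hs : IsPotential φ g s) :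
    transport φ g = s 1 * (s 0)⁻¹ := by
  have h := (Classical.epsilon_spec ⟨s, hs⟩ : IsPotential φ g _).coboundary_eq hs hU hcover
  exact congrArg (fun f => f.toFun (.mk (⟨.id I, rfl, rfl⟩ : Path (0 : I) 1))) h

variable (hφ : Compatible φ)
include hφ

theorem exists_isPotential_unitInterval (g : C(I, X)) : ∃ s, IsPotential φ g s :=
  exists_isPotential_of_retract hU hcover hφ (E := ℝ) (e := ⟨Subtype.val, by fun_prop⟩)
    (r := ⟨projIcc 0 1 zero_le_one, continuous_projIcc⟩)
    (ContinuousMap.ext fun t => projIcc_val zero_le_one t) g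

theorem exists_isPotential_unitInterval_prod (F : C(I × I, X)) : ∃ s, IsPotential φ F s :=
  exists_isPotential_of_retract hU hcover hφ (E := ℝ × ℝ)
    (e := ⟨Prod.map Subtype.val Subtype.val, by fun_prop⟩)
    (r := ⟨Prod.map (projIcc 0 1 zero_le_one) (projIcc 0 1 zero_le_one),
      continuous_projIcc.prodMap continuous_projIcc⟩)
    (ContinuousMap.ext fun p =>
      Prod.ext (projIcc_val zero_le_one p.1) (projIcc_val zero_le_one p.2)) F

theorem transport_trans {x y z : X} (γ : Path x y) (γ' : Path y z) :
    transport φ (γ.trans γ' : C(I, X)) =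
      transport φ (γ' : C(I, X)) * transport φ (γ : C(I, X)) := by
  obtain ⟨s, hs⟩ := exists_isPotential_unitInterval hU hcover hφ (γ.trans γ' : C(I, X))
  let l : C(I, I) := ⟨fun t => ⟨t / 2, by linarith [t.2.1], by linarith [t.2.2]⟩, by fun_prop⟩
  let r : C(I, I) :=
    ⟨fun t => ⟨(1 + t) / 2, by linarith [t.2.1], by linarith [t.2.2]⟩, by fun_prop⟩
  have hl : (γ.trans γ' : C(I, X)).comp l = γ := by
    ext t
    have ht : (t / 2 : ℝ) ≤ 1 / 2 := by linarith [t.2.2]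
    exact (Path.trans_apply ..).trans <| (dif_pos ht).trans <|
      congrArg γ (Subtype.ext (mul_div_cancel₀ (t : ℝ) two_ne_zero))
  have hr : (γ.trans γ' : C(I, X)).comp r = γ' := by
    ext t
    rcases eq_or_lt_of_le t.2.1 with ht | ht
    · obtain rfl : t = 0 := Subtype.ext ht.symm
      simp [Path.trans_apply, r]
    · have ht' : ¬ ((1 + t) / 2 : ℝ) ≤ 1 / 2 := by linarith
      exact (Path.trans_apply ..).trans <| (dif_neg ht').trans <|
        congrArg γ' (Subtype.ext (show 2 * ((1 + t) / 2) - 1 = (t : ℝ) by ring))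
  have hsl : IsPotential φ γ (s ∘ l) := hl ▸ hs.comp l
  have hsr : IsPotential φ γ' (s ∘ r) := hr ▸ hs.comp r
  have hlr : l 1 = r 0 := by simp [l, r]
  have hl0 : l 0 = 0 := by simp [l]
  have hr1 : r 1 = 1 := by simp [r]
  rw [hs.transport_eq hU hcover, hsl.transport_eq hU hcover, hsr.transport_eq hU hcover]
  simp [hlr, hl0, hr1]

theorem transport_refl (x : X) : transport φ (Path.refl x : C(I, X)) = 1 := by
  simpa using transport_trans hU hcover hφ (.refl x) (.refl x)

theorem transport_eq_of_homotopic {x y : X} {γ γ' : Path x y} (h : γ.Homotopic γ') :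
    transport φ (γ : C(I, X)) = transport φ (γ' : C(I, X)) := by
  obtain ⟨H⟩ := h
  obtain ⟨s, hs⟩ := exists_isPotential_unitInterval_prod hU hcover hφ H.toContinuousMap
  have hleft : s (1, 0) * (s (0, 0))⁻¹ = 1 := by
    have hs' := hs.comp (.prodMk (.id I) (.const I 0))
    rw [show H.toContinuousMap.comp _ = (Path.refl x : C(I, X)) by ext t; simp] at hs'
    rw [← transport_refl hU hcover hφ x, hs'.transport_eq hU hcover]
    rfl
  have hright : s (1, 1) * (s (0, 1))⁻¹ = 1 := by
    have hs' := hs.comp (.prodMk (.id I) (.const I 1))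
    rw [show H.toContinuousMap.comp _ = (Path.refl y : C(I, X)) by ext t; simp] at hs'
    rw [← transport_refl hU hcover hφ y, hs'.transport_eq hU hcover]
    rfl
  have hbot := hs.comp (.prodMk (.const I 0) (.id I))
  have htop := hs.comp (.prodMk (.const I 1) (.id I))
  rw [show H.toContinuousMap.comp _ = (γ : C(I, X)) by ext t; simp] at hbot
  rw [show H.toContinuousMap.comp _ = (γ' : C(I, X)) by ext t; simp] at htop
  rw [hbot.transport_eq hU hcover, htop.transport_eq hU hcover]
  simp [mul_inv_eq_one.1 hleft, mul_inv_eq_one.1 hright]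

theorem transport_of_mem {i : ι} {x y : U i} (γ : Path x y) :
    transport φ (γ.map continuous_subtype_val : C(I, X)) = φ i (.mk γ) := by
  obtain ⟨g, rfl, rfl⟩ := γ
  let F : C(I, X) := .comp ⟨Subtype.val, continuous_subtype_val⟩ g
  obtain ⟨s, hs⟩ := exists_isPotential_unitInterval hU hcover hφ F
  let δ : Path (⟨0, (g 0).2⟩ : F ⁻¹' U i) ⟨1, (g 1).2⟩ :=
    ⟨⟨fun t => ⟨t, (g t).2⟩, by fun_prop⟩, rfl, rfl⟩
  exact (hs.transport_eq hU hcover).trans (congrArg (fun f => f.toFun (.mk δ)) (hs i)).symm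

theorem Compatible.exists_forall_restrict_eq : ∃ T : Holonomy X G, ∀ i, T.restrict (U i) = φ i := by
  refine ⟨⟨fun α => Quotient.lift (fun γ : Path _ _ => transport φ (γ : C(I, X)))
    (fun _ _ h => transport_eq_of_homotopic hU hcover hφ h) α, fun α β => ?_⟩, fun i => ?_⟩
  · induction α using Path.Homotopic.Quotient.ind
    induction β using Path.Homotopic.Quotient.ind
    exact transport_trans hU hcover hφ _ _
  · ext x y α
    induction α using Path.Homotopic.Quotient.ind with | mk γ
    exact transport_of_mem hU hcover hφ γ

end Holonomy
end Transport

section OpenPair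

variable {X G : Type*} [TopologicalSpace X] [Group G]

namespace Holonomy

theorem exists_restrict_eq_and_restrict_eq {U V : Set X} (hU : IsOpen U) (hV : IsOpen V)
    (hUV : U ∪ V = univ) {f : Holonomy U G} {f' : Holonomy V G}
    (h : f.comap (.inclusion inter_subset_left : C(↥(U ∩ V), U)) =
      f'.comap (.inclusion inter_subset_right)) :
    ∃ T : Holonomy X G, T.restrict U = f ∧ T.restrict V = f' := by
  let W : Bool → Set X
    | true => U
    | false => V
  let φ : ∀ i, Holonomy (W i) G
    | true => f
    | false => f'
  have hφ : Compatible φ := by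
    rintro (_ | _) (_ | _)
    · rfl
    · have h' := congrArg (comap · (.inclusion (inter_comm V U).subset)) h
      simp only [← comap_comp] at h'
      exact h'.symm
    · exact h
    · rfl
  obtain ⟨T, hT⟩ := Compatible.exists_forall_restrict_eq (U := W)
    (by rintro (_ | _) <;> assumption)
    (fun x => (eq_univ_iff_forall.1 hUV x).elim (⟨true, ·⟩) (⟨false, ·⟩)) hφ
  exact ⟨T, hT true, hT false⟩

end Holonomy
end OpenPair

section BasePaths

variable {X Y ι : Type*} [TopologicalSpace X] [TopologicalSpace Y]

/-- The unique homotopy class of paths in a simply connected subset, seen in the ambient space. -/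
noncomputable def innerPath {S : Set X} (hS : IsSimplyConnected S) (x y : S) :
    Path.Homotopic.Quotient (x : X) y :=
  have := hS.simplyConnectedSpace
  (Path.Homotopic.Quotient.mk (PathConnectedSpace.somePath x y)).map
    ⟨Subtype.val, continuous_subtype_val⟩

theorem map_val_eq_innerPath {S : Set X} (hS : IsSimplyConnected S) {x y : S}
    (α : Path.Homotopic.Quotient x y) :
    α.map ⟨Subtype.val, continuous_subtype_val⟩ = innerPath hS x y :=
  have := hS.simplyConnectedSpace
  congrArg (Path.Homotopic.Quotient.map · _) (Subsingleton.elim _ _)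

theorem innerPath_trans {S : Set X} (hS : IsSimplyConnected S) (x y z : S) :
    (innerPath hS x y).trans (innerPath hS y z) = innerPath hS x z := by
  have := hS.simplyConnectedSpace
  rw [← map_val_eq_innerPath hS (.mk ((PathConnectedSpace.somePath x y).trans
    (PathConnectedSpace.somePath y z)))]
  simp only [← Path.Homotopic.Quotient.mk_map, Path.map_trans]
  rfl

theorem map_innerPath {S : Set X} {T : Set Y} (hS : IsSimplyConnected S) (hT : IsSimplyConnected T)
    (f : C(X, Y)) (h : MapsTo f S T) (x y : S) :
    (innerPath hS x y).map f = innerPath hT ⟨f x, h x.2⟩ ⟨f y, h y.2⟩ := by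
  have := hS.simplyConnectedSpace
  exact map_val_eq_innerPath hT ((Path.Homotopic.Quotient.mk
    (PathConnectedSpace.somePath x y)).map ⟨h.restrict, f.continuous.restrict h⟩)

/-- Any base paths become compatible with the inner paths after rerouting them through one chosen
point of each subset. -/
theorem exists_basePaths [PathConnectedSpace Y] (b : Y) {P : ι → Set Y}
    (hP : ∀ i, IsSimplyConnected (P i)) (hdisj : Pairwise (Function.onFun Disjoint P)) :
    ∃ β : ∀ y, Path.Homotopic.Quotient b y, β b = .refl b ∧
      ∀ i (x y : P i), (β x).trans (innerPath (hP i) x y) = β y := by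
  choose p hp using fun i => (hP i).nonempty
  let ω (y : Y) : Path.Homotopic.Quotient b y := .mk (PathConnectedSpace.somePath b y)
  have hex (y : Y) : ∃ δ : Path.Homotopic.Quotient b y, ∀ i (hi : y ∈ P i),
      δ = (ω (p i)).trans (innerPath (hP i) ⟨_, hp i⟩ ⟨y, hi⟩) := by
    by_cases h : ∃ i, y ∈ P i
    · obtain ⟨i, hi⟩ := h
      refine ⟨(ω (p i)).trans (innerPath (hP i) ⟨_, hp i⟩ ⟨y, hi⟩), fun j hj => ?_⟩
      obtain rfl : i = j := by_contra fun hne => (hdisj hne).le_bot ⟨hi, hj⟩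
      rfl
    · exact ⟨ω y, fun i hi => (h ⟨i, hi⟩).elim⟩
  choose β hβ using hex
  refine ⟨fun y => (β b).symm.trans (β y), Path.Homotopic.Quotient.symm_trans _, fun i x y => ?_⟩
  simp only [hβ x i x.2, hβ y i y.2, Path.Homotopic.Quotient.trans_assoc, innerPath_trans]

end BasePaths

open Holonomy

section BasePathHolonomy

variable {X Y : Type*} [TopologicalSpace X] [TopologicalSpace Y] {b : X}
  {β : ∀ x, Path.Homotopic.Quotient b x}

namespace Holonomy

theorem ofBasePaths_eq_one_iff {x y : X} {α : Path.Homotopic.Quotient x y} :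
    ofBasePaths β α = 1 ↔ (β x).trans α = β y := by
  change ((β x).trans α).trans (β y).symm = .refl b ↔ _
  refine ⟨fun h => ?_, fun h => by rw [h, Path.Homotopic.Quotient.trans_symm]⟩
  rw [← Path.Homotopic.Quotient.refl_trans (β y), ← h, Path.Homotopic.Quotient.trans_assoc,
    Path.Homotopic.Quotient.symm_trans, Path.Homotopic.Quotient.trans_refl]

theorem ofBasePaths_apply_basePath (hb : β b = .refl b) (x : X) : ofBasePaths β (β x) = 1 := by
  rw [ofBasePaths_eq_one_iff, hb, Path.Homotopic.Quotient.refl_trans]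

theorem ofBasePaths_apply_loop (hb : β b = .refl b) (α : FundamentalGroup X b) :
    ofBasePaths β α = α := by
  change ((β b).trans α).trans (β b).symm = α
  rw [hb, Path.Homotopic.Quotient.refl_trans, ← Path.Homotopic.Quotient.mk_refl,
    ← Path.Homotopic.Quotient.mk_symm, Path.refl_symm, Path.Homotopic.Quotient.mk_refl,
    Path.Homotopic.Quotient.trans_refl]

theorem apply_ofBasePaths {G : Type*} [Group G] (f : Holonomy X G) {x y : X}
    (α : Path.Homotopic.Quotient x y) :
    f (ofBasePaths β α : Path.Homotopic.Quotient b b) = (f (β y))⁻¹ * (f α * f (β x)) := by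
  rw [← f.map_symm, ← f.map_trans, ← f.map_trans]
  rfl

theorem map_ofBasePaths (g : C(X, Y)) {δ : ∀ y, Path.Homotopic.Quotient (g b) y}
    (hδ : ∀ x, δ (g x) = (β x).map g) {x y : X} (α : Path.Homotopic.Quotient x y) :
    FundamentalGroup.map g b (ofBasePaths β α) = ofBasePaths δ (α.map g) := by
  change (((β x).trans α).trans (β y).symm).map g =
    ((δ (g x)).trans (α.map g)).trans (δ (g y)).symm
  rw [hδ, hδ]
  induction α using Path.Homotopic.Quotient.ind
  induction β x using Path.Homotopic.Quotient.ind
  induction β y using Path.Homotopic.Quotient.ind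
  simp only [← Path.Homotopic.Quotient.mk_trans, ← Path.Homotopic.Quotient.mk_symm,
    ← Path.Homotopic.Quotient.mk_map, Path.map_trans, Path.map_symm]

end Holonomy
end BasePathHolonomy

section Handles

variable {X J : Type*} [TopologicalSpace X] {Y : Set X} {N : J → Set X} {P : J → Bool → Set X}

/-- `X` is obtained from the open set `Y` by attaching, for each `j`, a one-handle: the simply
connected open set `N j`, which meets `Y` in its two ends `P j true` and `P j false`. -/
structure IsHandleCover (Y : Set X) (N : J → Set X) (P : J → Bool → Set X) : Prop where
  isOpen_base : IsOpen Y
  isPathConnected_base : IsPathConnected Y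
  isOpen_handle : ∀ j, IsOpen (N j)
  isSimplyConnected_handle : ∀ j, IsSimplyConnected (N j)
  pairwise_disjoint : Pairwise (Function.onFun Disjoint N)
  mem_or_exists_mem : ∀ x, x ∈ Y ∨ ∃ j, x ∈ N j
  isOpen_end : ∀ j e, IsOpen (P j e)
  isSimplyConnected_end : ∀ j e, IsSimplyConnected (P j e)
  disjoint_end : ∀ j, Disjoint (P j true) (P j false)
  inter_eq : ∀ j, N j ∩ Y = P j true ∪ P j false

/-- The inclusion of a subspace. -/
abbrev subtypeVal (Y : Set X) : C(Y, X) := ⟨Subtype.val, continuous_subtype_val⟩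

open Classical in
/-- The locally constant function on the ends of the handles that labels the end `P j true` by the
generator `j` and is trivial elsewhere. -/
noncomputable def endLabel (P : J → Bool → Set X) (x : X) : FreeGroup J :=
  if h : ∃ j, x ∈ P j true then .of h.choose else 1

namespace IsHandleCover

variable (h : IsHandleCover Y N P)
include h

theorem end_subset_handle (j : J) (e : Bool) : P j e ⊆ N j := by
  rintro x hx
  have hx' : x ∈ N j ∩ Y := h.inter_eq j ▸ (by cases e; exacts [.inr hx, .inl hx])
  exact hx'.1

theorem end_subset_base (j : J) (e : Bool) : P j e ⊆ Y := by
  rintro x hx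
  have hx' : x ∈ N j ∩ Y := h.inter_eq j ▸ (by cases e; exacts [.inr hx, .inl hx])
  exact hx'.2

theorem isSimplyConnected_preimage_end (j : J) (e : Bool) :
    IsSimplyConnected ((↑) ⁻¹' P j e : Set Y) := by
  rw [← IsEmbedding.subtypeVal.isSimplyConnected_image, Subtype.image_preimage_coe,
    inter_eq_right.2 (h.end_subset_base j e)]
  exact h.isSimplyConnected_end j e

theorem pairwise_disjoint_end :
    Pairwise (Function.onFun Disjoint fun k : J × Bool => ((↑) ⁻¹' P k.1 k.2 : Set Y)) := by
  rintro ⟨i, e⟩ ⟨j, e'⟩ hne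
  refine Disjoint.preimage _ ?_
  rcases eq_or_ne i j with rfl | hij
  · cases e <;> cases e' <;> simp_all [h.disjoint_end i, (h.disjoint_end i).symm]
  · exact (h.pairwise_disjoint hij).mono (h.end_subset_handle i e) (h.end_subset_handle j e')

theorem pathConnectedSpace : PathConnectedSpace X := by
  obtain ⟨b, -, hb⟩ := h.isPathConnected_base
  have hjoined (x : X) : Joined b x := by
    rcases h.mem_or_exists_mem x with hx | ⟨j, hj⟩
    · exact (hb hx).joined
    · obtain ⟨p, hp⟩ := (h.isSimplyConnected_end j true).nonempty
      exact (hb (h.end_subset_base j true hp)).joined.trans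
        ((h.isSimplyConnected_handle j).isPathConnected.joinedIn p
          (h.end_subset_handle j true hp) x hj).joined
  exact ⟨⟨b⟩, fun x y => (hjoined x).symm.trans (hjoined y)⟩

theorem endLabel_of_mem {j : J} {x : X} (hx : x ∈ P j true) : endLabel P x = .of j := by
  have hex : ∃ j, x ∈ P j true := ⟨j, hx⟩
  rw [endLabel, dif_pos hex]
  congr
  by_contra hne
  exact (h.pairwise_disjoint hne).le_bot ⟨h.end_subset_handle _ _ hex.choose_spec,
    h.end_subset_handle _ _ hx⟩

theorem endLabel_of_notMem {j : J} {x : X} (hx : x ∈ N j) (hx' : x ∉ P j true) :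
    endLabel P x = 1 := by
  refine dif_neg fun ⟨i, hi⟩ => ?_
  obtain rfl : i = j := by_contra fun hne =>
    (h.pairwise_disjoint hne).le_bot ⟨h.end_subset_handle _ _ hi, hx⟩
  exact hx' hi

theorem endLabel_of_mem_false {j : J} {x : X} (hx : x ∈ P j false) : endLabel P x = 1 :=
  h.endLabel_of_notMem (h.end_subset_handle j _ hx) fun hx' => (h.disjoint_end j).le_bot ⟨hx', hx⟩

theorem endLabel_eq {j : J} {e : Bool} {x y : X} (hx : x ∈ P j e) (hy : y ∈ P j e) :
    endLabel P x = endLabel P y := by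
  cases e
  · rw [h.endLabel_of_mem_false hx, h.endLabel_of_mem_false hy]
  · rw [h.endLabel_of_mem hx, h.endLabel_of_mem hy]

theorem exists_mem_end {j : J} {x : X} (hN : x ∈ N j) (hY : x ∈ Y) : ∃ e, x ∈ P j e :=
  (h.inter_eq j ▸ ⟨hN, hY⟩ : x ∈ P j true ∪ P j false).elim (⟨_, ·⟩) (⟨_, ·⟩)

variable {b : Y} {β : ∀ y, Path.Homotopic.Quotient b y}
  (hβ : ∀ j e (x y : ((↑) ⁻¹' P j e : Set Y)),
    (β x).trans (innerPath (h.isSimplyConnected_preimage_end j e) x y) = β y)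

include hβ in
theorem exists_gluedHolonomy :
    ∃ T : Holonomy X (Monoid.Coprod (FreeGroup J) (FundamentalGroup Y b)),
      T.restrict Y = (ofBasePaths β).map Monoid.Coprod.inr ∧
      T.restrict (⋃ j, N j) =
        (coboundary fun x => Monoid.Coprod.inl (endLabel P x)).restrict _ := by
  refine exists_restrict_eq_and_restrict_eq h.isOpen_base (isOpen_iUnion h.isOpen_handle)
    (eq_univ_of_forall fun x => (h.mem_or_exists_mem x).imp_right mem_iUnion.2)
    (ext_of_forall_nhds fun ⟨x, hxY, hxN⟩ => ?_)
  obtain ⟨j, hj⟩ := mem_iUnion.1 hxN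
  obtain ⟨e, he⟩ := h.exists_mem_end hj hxY
  refine ⟨_, ((h.isOpen_end j e).preimage continuous_subtype_val).mem_nhds he, ?_⟩
  ext y z α
  let i : C(((↑) ⁻¹' P j e : Set ↥(Y ∩ ⋃ j, N j)), ((↑) ⁻¹' P j e : Set Y)) :=
    ⟨fun x => ⟨⟨x, x.1.2.1⟩, x.2⟩, by fun_prop⟩
  have hα : ((α.map (subtypeVal _)).map (.inclusion inter_subset_left : C(_, Y))) =
      innerPath (h.isSimplyConnected_preimage_end j e) (i y) (i z) := by
    rw [← map_val_eq_innerPath _ (α.map i), ← Path.Homotopic.Quotient.map_comp,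
      ← Path.Homotopic.Quotient.map_comp]
    rfl
  have hleft : ofBasePaths β ((α.map (subtypeVal _)).map
      (.inclusion inter_subset_left : C(_, Y))) = 1 :=
    (congrArg (ofBasePaths β).toFun hα).trans
      (ofBasePaths_eq_one_iff.2 (hβ j e (i y) (i z)))
  have hright : Monoid.Coprod.inl (endLabel P (z : X)) *
      (Monoid.Coprod.inl (endLabel P (y : X)))⁻¹ =
        (1 : Monoid.Coprod (FreeGroup J) (FundamentalGroup Y b)) := by
    rw [h.endLabel_eq z.2 y.2, mul_inv_cancel]
  exact (congrArg Monoid.Coprod.inr hleft).trans ((map_one _).trans hright.symm)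

theorem exists_extended_basePaths (p : ∀ j, P j false) :
    ∃ γ : ∀ x, Path.Homotopic.Quotient (b : X) x, (∀ y : Y, γ y = (β y).map (subtypeVal Y)) ∧
      ∀ j (x : N j), (x : X) ∉ Y → (γ (p j)).trans (innerPath (h.isSimplyConnected_handle j)
        (inclusion (h.end_subset_handle j _) (p j)) x) = γ x := by
  let q (j : J) : Y := inclusion (h.end_subset_base j false) (p j)
  have hex (x : X) : ∃ δ : Path.Homotopic.Quotient (b : X) x,
      (∀ hx : x ∈ Y, δ = (β ⟨x, hx⟩).map (subtypeVal Y)) ∧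
      ∀ j (hx : x ∈ N j), x ∉ Y → ((β (q j)).map (subtypeVal Y)).trans
        (innerPath (h.isSimplyConnected_handle j)
          (inclusion (h.end_subset_handle j _) (p j)) ⟨x, hx⟩) = δ := by
    by_cases hY : x ∈ Y
    · exact ⟨(β ⟨x, hY⟩).map (subtypeVal Y), fun _ => rfl, fun j hx hx' => (hx' hY).elim⟩
    · obtain ⟨j, hj⟩ := (h.mem_or_exists_mem x).resolve_left hY
      refine ⟨((β (q j)).map (subtypeVal Y)).trans
        (innerPath (h.isSimplyConnected_handle j)
          (inclusion (h.end_subset_handle j _) (p j)) ⟨x, hj⟩),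
        fun hx => (hY hx).elim, fun i hi _ => ?_⟩
      obtain rfl : i = j := by_contra fun hne => (h.pairwise_disjoint hne).le_bot ⟨hi, hj⟩
      rfl
  choose γ hγ hγ' using hex
  refine ⟨γ, fun y => hγ y y.2, fun j x hx => ?_⟩
  rw [← hγ' x j x.2 hx]
  exact congrArg (Path.Homotopic.Quotient.trans · _) (hγ _ (q j).2)

end IsHandleCover
end Handles

section HandleIso

variable {X J : Type*} [TopologicalSpace X] {Y : Set X} {N : J → Set X} {P : J → Bool → Set X}
  {b : Y} {β : ∀ y, Path.Homotopic.Quotient b y} {γ : ∀ x, Path.Homotopic.Quotient (b : X) x}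

namespace IsHandleCover

/-- The homomorphism that is induced by the inclusion of `Y` on `π₁(Y, b)` and sends the generator
`j` to the loop running through the handle `N j` from `p j` to `q j`. -/
noncomputable def handleHom (h : IsHandleCover Y N P) (γ : ∀ x, Path.Homotopic.Quotient (b : X) x)
    (p : ∀ j, P j false) (q : ∀ j, P j true) :
    Monoid.Coprod (FreeGroup J) (FundamentalGroup Y b) →* FundamentalGroup X (b : X) :=
  Monoid.Coprod.lift
    (FreeGroup.lift fun j => ofBasePaths γ (innerPath (h.isSimplyConnected_handle j)
      (inclusion (h.end_subset_handle j _) (p j)) (inclusion (h.end_subset_handle j _) (q j))))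
    (FundamentalGroup.map (subtypeVal Y) b)

theorem handleHom_inl_of (h : IsHandleCover Y N P) {p : ∀ j, P j false} {q : ∀ j, P j true}
    (j : J) : h.handleHom γ p q (Monoid.Coprod.inl (.of j)) =
      ofBasePaths γ (innerPath (h.isSimplyConnected_handle j)
        (inclusion (h.end_subset_handle j _) (p j)) (inclusion (h.end_subset_handle j _) (q j))) :=
  (Monoid.Coprod.lift_apply_inl ..).trans (FreeGroup.lift_apply_of ..)

theorem handleHom_inr (h : IsHandleCover Y N P) {p : ∀ j, P j false} {q : ∀ j, P j true}
    (α : FundamentalGroup Y b) : h.handleHom γ p q (Monoid.Coprod.inr α) =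
      FundamentalGroup.map (subtypeVal Y) b α :=
  Monoid.Coprod.lift_apply_inr ..

variable (h : IsHandleCover Y N P)
  (hβ : ∀ j e (x y : ((↑) ⁻¹' P j e : Set Y)),
    (β x).trans (innerPath (h.isSimplyConnected_preimage_end j e) x y) = β y)
  (hγ : ∀ y : Y, γ y = (β y).map (subtypeVal Y)) {p : ∀ j, P j false} {q : ∀ j, P j true}
  (hp : ∀ j (x : N j), (x : X) ∉ Y → (γ (p j)).trans (innerPath (h.isSimplyConnected_handle j)
        (inclusion (h.end_subset_handle j _) (p j)) x) = γ x)

include hβ hγ in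
theorem ofBasePaths_innerPath_end {j : J} {e : Bool} (x y : P j e) :
    ofBasePaths γ (innerPath (h.isSimplyConnected_handle j)
      (inclusion (h.end_subset_handle j e) x) (inclusion (h.end_subset_handle j e) y)) = 1 := by
  let i (x : P j e) : ((↑) ⁻¹' P j e : Set Y) := ⟨⟨x, h.end_subset_base j e x.2⟩, x.2⟩
  have hi := map_innerPath (h.isSimplyConnected_preimage_end j e) (h.isSimplyConnected_handle j)
    (subtypeVal Y) (fun _ hz => h.end_subset_handle j e hz) (i x) (i y)
  refine (congrArg (ofBasePaths γ).toFun hi).symm.trans ((map_ofBasePaths _ hγ _).symm.trans ?_)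
  rw [ofBasePaths_eq_one_iff.2 (hβ j e (i x) (i y))]
  exact map_one _

include hβ hγ hp in
theorem ofBasePaths_innerPath_handle {j : J} (x : N j) :
    ofBasePaths γ (innerPath (h.isSimplyConnected_handle j)
      (inclusion (h.end_subset_handle j _) (p j)) x) =
        h.handleHom γ p q (Monoid.Coprod.inl (endLabel P (x : X))) := by
  by_cases hY : (x : X) ∈ Y
  · obtain ⟨_ | _, he⟩ := h.exists_mem_end x.2 hY
    · rw [h.endLabel_of_mem_false he, map_one, map_one]
      exact h.ofBasePaths_innerPath_end hβ hγ (p j) ⟨x, he⟩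
    · rw [h.endLabel_of_mem he, h.handleHom_inl_of,
        ← innerPath_trans _ _ (inclusion (h.end_subset_handle j _) (q j)), map_trans]
      exact (congrArg (· * _) (h.ofBasePaths_innerPath_end hβ hγ (q j) ⟨x, he⟩)).trans (one_mul _)
  · rw [h.endLabel_of_notMem x.2 fun hx => hY (h.end_subset_base j _ hx), map_one, map_one,
      ofBasePaths_eq_one_iff]
    exact hp j x hY

variable {T : Holonomy X (Monoid.Coprod (FreeGroup J) (FundamentalGroup Y b))}
  (hTY : T.restrict Y = (ofBasePaths β).map Monoid.Coprod.inr)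
  (hTN : T.restrict (⋃ j, N j) = (coboundary fun x => Monoid.Coprod.inl (endLabel P x)).restrict _)

include hTN in
theorem gluedHolonomy_innerPath {j : J} (x y : N j) :
    T (innerPath (h.isSimplyConnected_handle j) x y) =
      Monoid.Coprod.inl (endLabel P (y : X)) * (Monoid.Coprod.inl (endLabel P (x : X)))⁻¹ := by
  have := (h.isSimplyConnected_handle j).simplyConnectedSpace
  let α := PathConnectedSpace.somePath x y
  let i : C(N j, ↥(⋃ j, N j)) := .inclusion (subset_iUnion N j)
  rw [← map_val_eq_innerPath _ (.mk α)]
  exact congrArg (fun f => f.toFun ((Path.Homotopic.Quotient.mk α).map i)) hTN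

include hβ hγ hp hTY hTN in
theorem map_handleHom_gluedHolonomy : T.map (h.handleHom γ p q) = ofBasePaths γ := by
  refine ext_of_forall_nhds fun x => ?_
  rcases h.mem_or_exists_mem x with hx | ⟨j, hj⟩
  · refine ⟨Y, h.isOpen_base.mem_nhds hx, ?_⟩
    ext y z α
    have hα : T (α.map (subtypeVal Y)) = Monoid.Coprod.inr (ofBasePaths β α) :=
      congrArg (fun f => f.toFun α) hTY
    exact (congrArg (h.handleHom γ p q) hα).trans
      ((h.handleHom_inr _).trans (map_ofBasePaths _ hγ α))
  · refine ⟨N j, (h.isOpen_handle j).mem_nhds hj, ?_⟩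
    ext y z α
    change h.handleHom γ p q (T (α.map _)) = ofBasePaths γ (α.map _)
    rw [map_val_eq_innerPath (h.isSimplyConnected_handle j), h.gluedHolonomy_innerPath hTN, map_mul,
      map_inv, mul_inv_eq_iff_eq_mul, ← h.ofBasePaths_innerPath_handle hβ hγ hp,
      ← h.ofBasePaths_innerPath_handle hβ hγ hp, ← map_trans, innerPath_trans]

include hγ hTY hTN in
theorem toMonoidHom_comp_handleHom (hb : β b = .refl b) :
    (T.toMonoidHom (b : X)).comp (h.handleHom γ p q) = .id _ := by
  have hY {y : Y} (α : Path.Homotopic.Quotient b y) :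
      T (α.map (subtypeVal Y)) = Monoid.Coprod.inr (ofBasePaths β α) :=
    congrArg (fun f => f.toFun α) hTY
  have hγ_one (y : Y) : T (γ y) = 1 := by
    rw [hγ]
    exact (hY (β y)).trans (by rw [ofBasePaths_apply_basePath hb, map_one])
  refine Monoid.Coprod.hom_ext (FreeGroup.ext_hom _ _ fun j => ?_) (MonoidHom.ext fun α => ?_)
  · refine (congrArg T.toFun (h.handleHom_inl_of j)).trans ((apply_ofBasePaths ..).trans ?_)
    rw [h.gluedHolonomy_innerPath hTN, hγ_one ⟨_, h.end_subset_base j _ (p j).2⟩,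
      hγ_one ⟨_, h.end_subset_base j _ (q j).2⟩, h.endLabel_of_mem (q j).2,
      h.endLabel_of_mem_false (p j).2]
    simp
  · refine (congrArg T.toFun (h.handleHom_inr α)).trans ((hY α).trans ?_)
    exact congrArg Monoid.Coprod.inr (ofBasePaths_apply_loop hb α)

include h in
theorem nonempty_fundamentalGroup_mulEquiv (b : Y) : Nonempty (FundamentalGroup X (b : X) ≃*
    Monoid.Coprod (FreeGroup J) (FundamentalGroup Y b)) := by
  have := isPathConnected_iff_pathConnectedSpace.1 h.isPathConnected_base
  obtain ⟨β, hb, hβ⟩ := exists_basePaths b (fun k : J × Bool => h.isSimplyConnected_preimage_end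
    k.1 k.2) h.pairwise_disjoint_end
  replace hβ (j : J) (e : Bool) := hβ (j, e)
  obtain ⟨T, hTY, hTN⟩ := h.exists_gluedHolonomy hβ
  let p (j : J) : P j false := ⟨_, (h.isSimplyConnected_end j false).nonempty.some_mem⟩
  let q (j : J) : P j true := ⟨_, (h.isSimplyConnected_end j true).nonempty.some_mem⟩
  obtain ⟨γ, hγ, hp⟩ := h.exists_extended_basePaths (β := β) p
  refine ⟨MonoidHom.toMulEquiv (T.toMonoidHom b) (h.handleHom γ p q) (MonoidHom.ext fun α => ?_)
    (h.toMonoidHom_comp_handleHom hγ hTY hTN hb)⟩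
  have hγb : γ b = .refl (b : X) := by rw [hγ, hb]; rfl
  exact (congrArg (fun f => f.toFun α) (h.map_handleHom_gluedHolonomy hβ hγ hp hTY hTN)).trans
    (ofBasePaths_apply_loop hγb α)

end IsHandleCover
end HandleIso

section UnorderedPairs

theorem isOpenMap_mk_confSetoid {n : ℕ} {X : Type*} [TopologicalSpace X] :
    IsOpenMap (Quotient.mk (confSetoid n X)) := by
  intro R hR
  rw [← isQuotientMap_quotient_mk'.isOpen_preimage]
  let τ (s : Equiv.Perm (Fin n)) (f : Conf n X) : Conf n X := ⟨f.1 ∘ s, f.2.comp s.injective⟩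
  have hτ (s : Equiv.Perm (Fin n)) : Continuous (τ s) :=
    (Continuous.comp (Pi.continuous_precomp s) continuous_subtype_val).subtype_mk _
  have hpre : Quotient.mk (confSetoid n X) ⁻¹' (Quotient.mk (confSetoid n X) '' R) =
      ⋃ s, τ s ⁻¹' R := by
    ext f
    simp only [mem_preimage, mem_image, Quotient.eq, mem_iUnion]
    constructor
    · rintro ⟨g, hg, s, hs⟩
      exact ⟨s, (Subtype.ext hs : g = τ s f) ▸ hg⟩
    · rintro ⟨s, hs⟩
      exact ⟨_, hs, s, rfl⟩
  exact hpre ▸ isOpen_iUnion fun s => hR.preimage (hτ s)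

variable {M : Type*} [TopologicalSpace M] {r r' : M → M → Prop}

theorem mk_confSetoid_two_eq_iff {f g : Conf 2 M} :
    Quotient.mk (confSetoid 2 M) f = Quotient.mk (confSetoid 2 M) g ↔
      f.1 0 = g.1 0 ∧ f.1 1 = g.1 1 ∨ f.1 0 = g.1 1 ∧ f.1 1 = g.1 0 := by
  rw [Quotient.eq]
  change (∃ s : Equiv.Perm (Fin 2), f.1 = g.1 ∘ s) ↔ _
  have hperm (s : Equiv.Perm (Fin 2)) : s = 1 ∨ s = Equiv.swap 0 1 := by decide +revert
  constructor
  · rintro ⟨s, hs⟩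
    rcases hperm s with rfl | rfl <;> simp [hs]
  · rintro (⟨h0, h1⟩ | ⟨h0, h1⟩)
    · exact ⟨1, funext fun i => by fin_cases i <;> assumption⟩
    · exact ⟨Equiv.swap 0 1, funext fun i => by fin_cases i <;> simpa⟩

theorem isEmbedding_conf_two : IsEmbedding fun f : Conf 2 M => (f.1 0, f.1 1) :=
  Homeomorph.finTwoArrow.isEmbedding.comp .subtypeVal

/-- The unordered pairs of distinct points, one of whose orderings is related by `r`. -/
def unorderedPairs (r : M → M → Prop) : Set (UConf 2 M) :=
  Quotient.mk (confSetoid 2 M) '' {f | r (f.1 0) (f.1 1)}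

theorem mk_mem_unorderedPairs {f : Conf 2 M} :
    Quotient.mk (confSetoid 2 M) f ∈ unorderedPairs r ↔
      r (f.1 0) (f.1 1) ∨ r (f.1 1) (f.1 0) := by
  constructor
  · rintro ⟨g, hg, hfg⟩
    rcases mk_confSetoid_two_eq_iff.1 hfg with ⟨h0, h1⟩ | ⟨h0, h1⟩
    · exact .inl (h0 ▸ h1 ▸ hg)
    · exact .inr (h0 ▸ h1 ▸ hg)
  · rintro (h | h)
    · exact ⟨f, h, rfl⟩
    · refine ⟨⟨f.1 ∘ Equiv.swap 0 1, f.2.comp (Equiv.injective _)⟩, ?_,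
        mk_confSetoid_two_eq_iff.2 (.inr ?_)⟩ <;> simp [h]

theorem isOpen_unorderedPairs (hr : IsOpen {z : M × M | r z.1 z.2}) :
    IsOpen (unorderedPairs r) :=
  isOpenMap_mk_confSetoid _ (hr.preimage isEmbedding_conf_two.continuous)

theorem nonempty_homeomorph_unorderedPairs (hr : IsOpen {z : M × M | r z.1 z.2})
    (hasymm : ∀ x y, r x y → ¬ r y x) :
    Nonempty ({z : M × M | r z.1 z.2} ≃ₜ unorderedPairs r) := by
  let R : Set (Conf 2 M) := {f | r (f.1 0) (f.1 1)}
  have hR : IsOpen R := hr.preimage isEmbedding_conf_two.continuous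
  have hinj : Function.Injective (R.domRestrict (Quotient.mk (confSetoid 2 M))) := by
    rintro ⟨f, hf⟩ ⟨g, hg⟩ hfg
    rcases mk_confSetoid_two_eq_iff.1 hfg with ⟨h0, h1⟩ | ⟨h0, h1⟩
    · exact Subtype.ext (isEmbedding_conf_two.injective (Prod.ext h0 h1))
    · exact (hasymm _ _ hf (h0 ▸ h1 ▸ hg)).elim
  have hmk : IsEmbedding (R.domRestrict (Quotient.mk (confSetoid 2 M))) :=
    (IsOpenEmbedding.of_continuous_injective_isOpenMap
      (continuous_quotient_mk'.comp continuous_subtype_val) hinj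
      (isOpenMap_mk_confSetoid.domRestrict hR)).isEmbedding
  have hpair : (fun f : Conf 2 M => (f.1 0, f.1 1)) '' R = {z | r z.1 z.2} := by
    refine Subset.antisymm (image_subset_iff.2 fun _ => id) fun z hz => ?_
    have hne : z.1 ≠ z.2 := fun h => hasymm z.1 z.2 hz (by simpa [h] using hz)
    refine ⟨⟨![z.1, z.2], fun i j hij => ?_⟩, by simpa [R] using hz, by simp⟩
    fin_cases i <;> fin_cases j <;> simp_all [hne.symm]
  exact ⟨(Homeomorph.setCongr hpair.symm).trans <|
    (isEmbedding_conf_two.homeomorphImage R).symm.trans <|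
      hmk.toHomeomorph.trans (.setCongr (range_domRestrict _ _))⟩

end UnorderedPairs

section HeightArcs

variable {J M : Type*} [TopologicalSpace M]

/-- A height function `h` all of whose coincidences occur between paired arcs: two points of equal
height lie on `A j true` and `A j false` for some `j`. The heights along an arc fill an interval,
the intervals of paired arcs overlap, and the pairs of a lower and a higher point form a
path-connected space. -/
structure HasPairedArcs (h : M → ℝ) (A : J → Bool → Set M) : Prop where
  continuous : Continuous h
  isOpen_arc : ∀ j e, IsOpen (A j e)
  convex_image : ∀ j e, Convex ℝ (h '' A j e)
  pairwise_disjoint : Pairwise (Function.onFun Disjoint fun k : J × Bool => A k.1 k.2)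
  exists_lt : ∀ j e, ∃ x ∈ A j e, ∃ y ∈ A j !e, h x < h y
  exists_mem_of_eq : ∀ x y, x ≠ y → h x = h y → ∃ j e, x ∈ A j e ∧ y ∈ A j !e
  isPathConnected_lt : IsPathConnected {z : M × M | h z.1 < h z.2}

/-- The unordered pairs of points of the paired arcs `A j e` and `A j !e` whose heights, in this
order, form a point of `C`. -/
def arcPairs (h : M → ℝ) (A : J → Bool → Set M) (j : J) (e : Bool) (C : Set (ℝ × ℝ)) :
    Set (UConf 2 M) :=
  unorderedPairs fun x y => (x ∈ A j e ∧ y ∈ A j !e) ∧ (h x, h y) ∈ C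

namespace HasPairedArcs

variable {h : M → ℝ} {A : J → Bool → Set M} (hA : HasPairedArcs h A)
include hA

theorem injOn_closure_arc (j : J) (e : Bool) : InjOn h (closure (A j e)) := by
  intro x hx y hy hxy
  by_contra hne
  obtain ⟨i, e', hx', hy'⟩ := hA.exists_mem_of_eq x y hne hxy
  have hmem {k : J × Bool} {z : M} (hz : z ∈ closure (A j e)) (hz' : z ∈ A k.1 k.2) :
      k = (j, e) := by
    by_contra hk
    exact ((hA.pairwise_disjoint hk).closure_right (hA.isOpen_arc _ _)).le_bot ⟨hz', hz⟩
  simpa using (hmem (k := (i, e')) hx hx').trans (hmem (k := (i, !e')) hy hy').symm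

theorem isEmbedding_arc [CompactSpace M] (j : J) (e : Bool) :
    IsEmbedding ((A j e).domRestrict h) := by
  have : CompactSpace (closure (A j e)) := isCompact_iff_compactSpace.1 isClosed_closure.isCompact
  have hclosure : IsEmbedding ((closure (A j e)).domRestrict h) :=
    (hA.continuous.continuousOn.domRestrict.isClosedEmbedding
      (hA.injOn_closure_arc j e).injective).isEmbedding
  exact hclosure.comp (.inclusion subset_closure)

theorem eq_of_mem {i j : J} {e e' : Bool} {x : M} (hx : x ∈ A i e) (hx' : x ∈ A j e') :
    i = j ∧ e = e' := by
  by_contra hne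
  exact (hA.pairwise_disjoint (i := (i, e)) (j := (j, e')) (by simpa using hne)).le_bot ⟨hx, hx'⟩

theorem isOpen_height_lt : IsOpen {z : M × M | h z.1 < h z.2} :=
  isOpen_lt (hA.continuous.comp continuous_fst) (hA.continuous.comp continuous_snd)

theorem isSimplyConnected_prod_arc [CompactSpace M] {j : J} {e : Bool} {C : Set (ℝ × ℝ)}
    (hC : Convex ℝ C) (hne : ∃ x ∈ A j e, ∃ y ∈ A j !e, (h x, h y) ∈ C) :
    IsSimplyConnected {z : M × M | (z.1 ∈ A j e ∧ z.2 ∈ A j !e) ∧ (h z.1, h z.2) ∈ C} := by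
  let F : A j e × A j (!e) → ℝ × ℝ := Prod.map ((A j e).domRestrict h) ((A j !e).domRestrict h)
  have hF : IsEmbedding F := (hA.isEmbedding_arc _ _).prodMap (hA.isEmbedding_arc _ _)
  have hval : Prod.map Subtype.val Subtype.val '' (F ⁻¹' C) =
      {z : M × M | (z.1 ∈ A j e ∧ z.2 ∈ A j !e) ∧ (h z.1, h z.2) ∈ C} := by
    ext ⟨x, y⟩
    simp [F, domRestrict, and_assoc, and_comm, and_left_comm]
  have himage : F '' (F ⁻¹' C) = (h '' A j e) ×ˢ (h '' A j !e) ∩ C := by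
    rw [image_preimage_eq_range_inter, range_prodMap, range_domRestrict, range_domRestrict]
  rw [← hval, (IsEmbedding.subtypeVal.prodMap .subtypeVal).isSimplyConnected_image,
    ← hF.isSimplyConnected_image, himage]
  obtain ⟨x, hx, y, hy, hxy⟩ := hne
  have := (((hA.convex_image j e).prod (hA.convex_image j !e)).inter hC).contractibleSpace
    ⟨_, ⟨mem_image_of_mem h hx, mem_image_of_mem h hy⟩, hxy⟩
  exact SimplyConnectedSpace.ofContractible _

theorem isOpen_prod_arc {j : J} {e : Bool} {C : Set (ℝ × ℝ)} (hC : IsOpen C) :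
    IsOpen {z : M × M | (z.1 ∈ A j e ∧ z.2 ∈ A j !e) ∧ (h z.1, h z.2) ∈ C} :=
  ((hA.isOpen_arc j e).prod (hA.isOpen_arc j !e)).inter
    (hC.preimage (hA.continuous.prodMap hA.continuous))

theorem isSimplyConnected_arcPairs [CompactSpace M] {j : J} {e : Bool} {C : Set (ℝ × ℝ)}
    (hC : Convex ℝ C) (hC' : IsOpen C) (hne : ∃ x ∈ A j e, ∃ y ∈ A j !e, (h x, h y) ∈ C) :
    IsSimplyConnected (arcPairs h A j e C) := by
  obtain ⟨f⟩ := nonempty_homeomorph_unorderedPairs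
    (r := fun x y => (x ∈ A j e ∧ y ∈ A j !e) ∧ (h x, h y) ∈ C) (hA.isOpen_prod_arc hC')
    fun x y hxy hyx => by simpa using (hA.eq_of_mem hxy.1.1 hyx.1.2).2
  exact f.toHomotopyEquiv.simplyConnectedSpace_iff.1 (hA.isSimplyConnected_prod_arc hC hne)

theorem isHandleCover [CompactSpace M] : IsHandleCover (unorderedPairs fun x y => h x < h y)
    (fun j => arcPairs h A j true univ) (fun j e => arcPairs h A j e {z | z.1 < z.2}) where
  isOpen_base := isOpen_unorderedPairs hA.isOpen_height_lt
  isPathConnected_base := by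
    obtain ⟨f⟩ := nonempty_homeomorph_unorderedPairs (r := fun x y => h x < h y)
      hA.isOpen_height_lt fun _ _ => not_lt_of_gt
    have := isPathConnected_iff_pathConnectedSpace.1 hA.isPathConnected_lt
    exact isPathConnected_iff_pathConnectedSpace.2 (f.surjective.pathConnectedSpace f.continuous)
  isOpen_handle j := isOpen_unorderedPairs (hA.isOpen_prod_arc isOpen_univ)
  isSimplyConnected_handle j := hA.isSimplyConnected_arcPairs convex_univ isOpen_univ <| by
    obtain ⟨x, hx, y, hy, -⟩ := hA.exists_lt j true
    exact ⟨x, hx, y, hy, mem_univ _⟩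
  pairwise_disjoint i j hij := disjoint_left.2 <| Quotient.ind fun f hi hj => by
    simp only [arcPairs, mk_mem_unorderedPairs] at hi hj
    rcases hi with hi | hi <;> rcases hj with hj | hj
    exacts [hij (hA.eq_of_mem hi.1.1 hj.1.1).1, hij (hA.eq_of_mem hi.1.1 hj.1.2).1,
      hij (hA.eq_of_mem hi.1.1 hj.1.2).1, hij (hA.eq_of_mem hi.1.1 hj.1.1).1]
  mem_or_exists_mem := Quotient.ind fun f => by
    simp only [arcPairs, mk_mem_unorderedPairs, mem_univ, and_true]
    rcases lt_trichotomy (h (f.1 0)) (h (f.1 1)) with hlt | heq | hlt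
    · exact .inl (.inl hlt)
    · obtain ⟨j, _ | _, hx, hy⟩ := hA.exists_mem_of_eq _ _ (f.2.ne zero_ne_one) heq
      exacts [.inr ⟨j, .inr ⟨hy, hx⟩⟩, .inr ⟨j, .inl ⟨hx, hy⟩⟩]
    · exact .inl (.inr hlt)
  isOpen_end j e := isOpen_unorderedPairs
    (hA.isOpen_prod_arc (isOpen_lt continuous_fst continuous_snd))
  isSimplyConnected_end j e := hA.isSimplyConnected_arcPairs
    (by simpa using (convexOn_id convex_univ).convex_strict_epigraph)
    (isOpen_lt continuous_fst continuous_snd) (hA.exists_lt j e)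
  disjoint_end j := disjoint_left.2 <| Quotient.ind fun f hi hj => by
    simp only [arcPairs, mk_mem_unorderedPairs, mem_ofPred_eq] at hi hj
    rcases hi with hi | hi <;> rcases hj with hj | hj
    · simpa using (hA.eq_of_mem hi.1.1 hj.1.1).2
    · exact lt_asymm hi.2 hj.2
    · exact lt_asymm hi.2 hj.2
    · simpa using (hA.eq_of_mem hi.1.1 hj.1.1).2
  inter_eq j := Set.ext <| Quotient.ind fun f => by
    simp only [arcPairs, mem_inter_iff, mem_union, mk_mem_unorderedPairs, mem_univ, and_true,
      mem_ofPred_eq, Bool.not_true, Bool.not_false]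
    tauto

end HasPairedArcs
end HeightArcs

section FundamentalGroups

open scoped ContinuousMap

universe u

theorem pathConnectedSpace_of_homotopyEquiv {X Y : Type*} [TopologicalSpace X]
    [TopologicalSpace Y] [PathConnectedSpace Y] (e : X ≃ₕ Y) : PathConnectedSpace X := by
  obtain ⟨H⟩ := e.left_inv
  have hj (x : X) : Joined (e.invFun (e.toFun x)) x := ⟨H.evalAt x⟩
  obtain ⟨y⟩ := (inferInstance : Nonempty Y)
  refine ⟨⟨e.invFun y⟩, fun x x' => (hj x).symm.trans (.trans ?_ (hj x'))⟩
  exact (PathConnectedSpace.joined _ _).map e.invFun.continuous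

variable {X Y : Type u} [TopologicalSpace X] [TopologicalSpace Y]

/-- The isomorphism of fundamental groups induced by a homotopy equivalence. -/
noncomputable def fundamentalGroupCongr (e : X ≃ₕ Y) (x : X) :
    FundamentalGroup X x ≃* FundamentalGroup Y (e x) :=
  (FundamentalGroupoidFunctor.equivOfHomotopyEquiv e).fullyFaithfulFunctor.mulEquivEnd _

theorem nonempty_fundamentalGroup_prod_mulEquiv (x : X) (y : Y) : Nonempty
    (FundamentalGroup (X × Y) (x, y) ≃* FundamentalGroup X x × FundamentalGroup Y y) :=
  ⟨{ (FundamentalGroup.map .fst (x, y)).prod (FundamentalGroup.map .snd (x, y)) with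
    invFun := fun α => Path.Homotopic.prod α.1 α.2
    left_inv := Path.Homotopic.prod_projLeft_projRight
    right_inv := fun _ =>
      Prod.ext (Path.Homotopic.projLeft_prod _ _) (Path.Homotopic.projRight_prod _ _) }⟩

theorem nonempty_fundamentalGroup_circle_mulEquiv :
    Nonempty (FundamentalGroup Circle 1 ≃* Multiplicative ℤ) := by
  have : Infinite (AddSubgroup.zmultiples (2 * Real.pi)) := by
    rw [← SetLike.coe_sort_coe, infinite_coe_iff, infinite_zmultiples,
      isOfFinAddOrder_iff_nsmul_eq_zero]
    simp [Real.pi_ne_zero, pos_iff_ne_zero]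
  exact ⟨(Circle.isAddQuotientCoveringMap_exp.fundamentalGroupEquiv ⟨0, Circle.exp_zero⟩).trans
    (MulOpposite.opMulEquiv.symm.trans intCyclicAddEquiv.symm.toMultiplicative)⟩

theorem nonempty_fundamentalGroup_torus_mulEquiv :
    Nonempty (FundamentalGroup (Circle × Circle) (1, 1) ≃* Multiplicative (ℤ × ℤ)) := by
  obtain ⟨φ⟩ := nonempty_fundamentalGroup_prod_mulEquiv (1 : Circle) (1 : Circle)
  obtain ⟨ψ⟩ := nonempty_fundamentalGroup_circle_mulEquiv
  exact ⟨φ.trans ((ψ.prodCongr ψ).trans (MulEquiv.prodMultiplicative ℤ ℤ).symm)⟩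

end FundamentalGroups

section Heights

variable {J M : Type*} [TopologicalSpace M] {h : M → ℝ} {A : J → Bool → Set M}

theorem HasPairedArcs.nonempty_fundamentalGroup_mulEquiv [CompactSpace M]
    (hA : HasPairedArcs h A) (x : UConf 2 M) (z : {z : M × M | h z.1 < h z.2}) :
    Nonempty (FundamentalGroup (UConf 2 M) x ≃*
      Monoid.Coprod (FreeGroup J) (FundamentalGroup {z : M × M | h z.1 < h z.2} z)) := by
  have := hA.isHandleCover.pathConnectedSpace
  have := isPathConnected_iff_pathConnectedSpace.1 hA.isHandleCover.isPathConnected_base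
  obtain ⟨f⟩ := nonempty_homeomorph_unorderedPairs (r := fun x y => h x < h y)
    hA.isOpen_height_lt fun _ _ => not_lt_of_gt
  obtain ⟨ψ⟩ := hA.isHandleCover.nonempty_fundamentalGroup_mulEquiv (f z)
  exact ⟨(FundamentalGroup.fundamentalGroupMulEquivOfPathConnected x _).trans
    (ψ.trans (.coprodCongr (.refl _) (fundamentalGroupCongr f.toHomotopyEquiv z).symm))⟩

end Heights

section CircleCoordinates

variable {c d : Circle}

theorem circle_re_sq_add_im_sq (c : Circle) : (c : ℂ).re ^ 2 + (c : ℂ).im ^ 2 = 1 := by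
  simpa [Complex.normSq_apply, sq] using Circle.normSq_coe c

theorem circle_re_mem_Icc (c : Circle) : (c : ℂ).re ∈ Icc (-1) 1 := by
  constructor <;> nlinarith [circle_re_sq_add_im_sq c, sq_nonneg (c : ℂ).im]

theorem circle_im_mem_Icc (c : Circle) : (c : ℂ).im ∈ Icc (-1) 1 := by
  constructor <;> nlinarith [circle_re_sq_add_im_sq c, sq_nonneg (c : ℂ).re]

theorem circle_re_mem_Ioo (h : (c : ℂ).im ≠ 0) : (c : ℂ).re ∈ Ioo (-1) 1 := by
  have := sq_pos_of_ne_zero h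
  constructor <;> nlinarith [circle_re_sq_add_im_sq c]

theorem circle_eq_or_im_lt_of_re_eq (h : (c : ℂ).re = (d : ℂ).re) :
    c = d ∨ (0 < (c : ℂ).im ∧ (d : ℂ).im < 0) ∨ ((c : ℂ).im < 0 ∧ 0 < (d : ℂ).im) := by
  have him : (c : ℂ).im ^ 2 = (d : ℂ).im ^ 2 := by
    linarith [h ▸ circle_re_sq_add_im_sq c, circle_re_sq_add_im_sq d]
  rcases sq_eq_sq_iff_eq_or_eq_neg.1 him with h' | h'
  · exact .inl (Circle.ext (Complex.ext h h'))
  · rcases lt_trichotomy (d : ℂ).im 0 with hd | hd | hd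
    · exact .inr (.inl ⟨by linarith, hd⟩)
    · exact .inl (Circle.ext (Complex.ext h (by linarith)))
    · exact .inr (.inr ⟨by linarith, hd⟩)

theorem circle_mem_slitPlane_of_re_ne (h : (c : ℂ).re ≠ -1) : (c : ℂ) ∈ Complex.slitPlane := by
  by_contra hc
  simp only [Complex.mem_slitPlane_iff, not_or, not_lt, not_not] at hc
  have := circle_re_sq_add_im_sq c
  exact h (by nlinarith [hc.1, hc.2, circle_re_mem_Icc c])

theorem exists_circle_re_eq_im_pos {r : ℝ} (hr : r ∈ Ioo (-1) 1) :
    ∃ c : Circle, (c : ℂ).re = r ∧ 0 < (c : ℂ).im := by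
  refine ⟨Circle.exp (Real.arccos r), ?_, ?_⟩
  · rw [Circle.coe_exp, Complex.exp_ofReal_mul_I_re, Real.cos_arccos hr.1.le hr.2.le]
  · rw [Circle.coe_exp, Complex.exp_ofReal_mul_I_im, Real.sin_arccos]
    exact Real.sqrt_pos.2 (by nlinarith [hr.1, hr.2])

theorem exists_circle_re_eq_im_neg {r : ℝ} (hr : r ∈ Ioo (-1) 1) :
    ∃ c : Circle, (c : ℂ).re = r ∧ (c : ℂ).im < 0 := by
  obtain ⟨c, hc, hc'⟩ := exists_circle_re_eq_im_pos hr
  exact ⟨c⁻¹, by simpa [Circle.coe_inv_eq_conj] using hc,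
    by simpa [Circle.coe_inv_eq_conj] using hc'⟩

end CircleCoordinates

/-- A model of the balloon graph with two balloons: a point has a coordinate `branch` on the path
that joins the two balloons, a coordinate `stem` on the stem attached to the midpoint of this path,
and coordinates `left` and `right` on the balloons, which are attached at its end points. -/
@[ext]
structure BalloonModel where
  branch : ℝ
  stem : ℝ
  left : Circle
  right : Circle
  branch_mem : branch ∈ Icc (-1) 1
  stem_mem : stem ∈ Icc 0 1
  branch_or_stem : branch = 0 ∨ stem = 0
  left_or : left = 1 ∨ branch = -1
  right_or : right = 1 ∨ branch = 1

namespace BalloonModel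

/-- The embedding of the model defining its topology. -/
def coords (x : BalloonModel) : ℝ × ℝ × Circle × Circle := (x.branch, x.stem, x.left, x.right)

noncomputable instance : TopologicalSpace BalloonModel := .induced coords inferInstance

theorem continuous_coords : Continuous coords := continuous_induced_dom

@[fun_prop]
theorem continuous_branch : Continuous branch := continuous_coords.fst

@[fun_prop]
theorem continuous_stem : Continuous stem := continuous_coords.snd.fst

@[fun_prop]
theorem continuous_left : Continuous left := continuous_coords.snd.snd.fst

@[fun_prop]
theorem continuous_right : Continuous right := continuous_coords.snd.snd.snd

theorem range_coords : range coords = {p : ℝ × ℝ × Circle × Circle | p.1 ∈ Icc (-1) 1 ∧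
    p.2.1 ∈ Icc 0 1 ∧ (p.1 = 0 ∨ p.2.1 = 0) ∧ (p.2.2.1 = 1 ∨ p.1 = -1) ∧
    (p.2.2.2 = 1 ∨ p.1 = 1)} := by
  refine Subset.antisymm (range_subset_iff.2 fun x => ?_) fun p ⟨h, h', h₀, h₁, h₂⟩ => ?_
  · exact ⟨x.branch_mem, x.stem_mem, x.branch_or_stem, x.left_or, x.right_or⟩
  · exact ⟨⟨_, _, _, _, h, h', h₀, h₁, h₂⟩, rfl⟩

instance : CompactSpace BalloonModel := by
  rw [← isCompact_univ_iff, IsInducing.isCompact_iff ⟨rfl⟩, image_univ]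
  refine (isCompact_Icc.prod (isCompact_Icc.prod isCompact_univ)).of_isClosed_subset
    (s := Icc (-1) 1 ×ˢ Icc 0 1 ×ˢ univ) ?_ ?_
  · have isClosed_or {Y Z W : Type} [TopologicalSpace Y] [TopologicalSpace Z] [TopologicalSpace W]
        [T2Space Z] [T2Space W] {f : Y → Z} {g : Y → W} (hf : Continuous f) (hg : Continuous g)
        (a : Z) (b : W) : IsClosed {y | f y = a ∨ g y = b} :=
      (isClosed_eq hf continuous_const).union (isClosed_eq hg continuous_const)
    rw [range_coords]
    exact (isClosed_Icc.preimage continuous_fst).and <|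
      (isClosed_Icc.preimage continuous_snd.fst).and <|
      (isClosed_or continuous_fst continuous_snd.fst _ _).and <|
      (isClosed_or continuous_snd.snd.fst continuous_fst _ _).and
      (isClosed_or continuous_snd.snd.snd continuous_fst _ _)
  · exact range_subset_iff.2 fun x => ⟨x.branch_mem, x.stem_mem, mem_univ _⟩

variable {x y : BalloonModel}

/-- The point `c` of the left balloon. -/
noncomputable def leftLoop (c : Circle) : BalloonModel :=
  ⟨-1, 0, c, 1, by simp, by simp, by simp, by simp, by simp⟩

/-- The point `c` of the right balloon. -/
noncomputable def rightLoop (c : Circle) : BalloonModel :=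
  ⟨1, 0, 1, c, by simp, by simp, by simp, by simp, by simp⟩

@[fun_prop]
theorem continuous_leftLoop : Continuous leftLoop :=
  continuous_induced_rng.2 <| continuous_const.prodMk <| continuous_const.prodMk <|
    continuous_id.prodMk continuous_const

@[fun_prop]
theorem continuous_rightLoop : Continuous rightLoop :=
  continuous_induced_rng.2 <| continuous_const.prodMk <| continuous_const.prodMk <|
    continuous_const.prodMk continuous_id

theorem eq_leftLoop (h : x.branch = -1) : x = leftLoop x.left :=
  BalloonModel.ext h (x.branch_or_stem.resolve_left (by simp [h])) rfl
    (x.right_or.resolve_right (by norm_num [h]))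

theorem eq_rightLoop (h : x.branch = 1) : x = rightLoop x.right :=
  BalloonModel.ext h (x.branch_or_stem.resolve_left (by simp [h]))
    (x.left_or.resolve_right (by norm_num [h])) rfl

/-- The height on the model: the left balloon hangs down from the lower end of the branch path, the
right balloon stands on its upper end, and the stem is half as steep as the branch next to it. -/
noncomputable def height (x : BalloonModel) : ℝ :=
  x.branch + x.stem / 2 - (1 - (x.left : ℂ).re) + (1 - (x.right : ℂ).re)

@[fun_prop]
theorem continuous_height : Continuous height := by
  unfold height
  fun_prop

theorem height_leftLoop (c : Circle) : height (leftLoop c) = (c : ℂ).re - 2 := by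
  simp only [height, leftLoop, Circle.coe_one, Complex.one_re]
  ring

theorem height_rightLoop (c : Circle) : height (rightLoop c) = 2 - (c : ℂ).re := by
  simp only [height, rightLoop, Circle.coe_one, Complex.one_re]
  ring

theorem height_eq_of_left_of_right (hl : x.left = 1) (hr : x.right = 1) :
    height x = x.branch + x.stem / 2 := by
  simp [height, hl, hr]

theorem height_le_neg_one_iff : height x ≤ -1 ↔ x.branch = -1 := by
  refine ⟨fun h => ?_, fun h => ?_⟩
  · by_contra hne
    have := x.branch_mem.1.lt_of_ne' hne
    rw [height, x.left_or.resolve_right hne, Circle.coe_one, Complex.one_re] at h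
    linarith [(circle_re_mem_Icc x.right).2, x.stem_mem.1]
  · rw [eq_leftLoop h, height_leftLoop]
    linarith [(circle_re_mem_Icc x.left).2]

theorem one_le_height_iff : 1 ≤ height x ↔ x.branch = 1 := by
  refine ⟨fun h => ?_, fun h => ?_⟩
  · by_contra hne
    have := x.branch_mem.2.lt_of_ne hne
    rw [height, x.right_or.resolve_right hne, Circle.coe_one, Complex.one_re] at h
    rcases x.branch_or_stem with h' | h' <;>
      linarith [(circle_re_mem_Icc x.left).2, x.stem_mem.2]
  · rw [eq_rightLoop h, height_rightLoop]
    linarith [(circle_re_mem_Icc x.right).2]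

/-- The six arcs between which the height has coincidences: the stem and the open right half of the
branch path, and the two open halves of each balloon. -/
def arc : Fin 3 → Bool → Set BalloonModel
  | 0, true => {x | 0 < x.stem}
  | 0, false => {x | x.branch ∈ Ioo 0 1}
  | 1, true => {x | (x.left : ℂ).im ∈ Ioi 0}
  | 1, false => {x | (x.left : ℂ).im ∈ Iio 0}
  | 2, true => {x | (x.right : ℂ).im ∈ Ioi 0}
  | 2, false => {x | (x.right : ℂ).im ∈ Iio 0}

theorem branch_eq_neg_one_of_left (h : (x.left : ℂ).im ≠ 0) : x.branch = -1 :=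
  x.left_or.resolve_left fun h' => h (by simp [h'])

theorem branch_eq_one_of_right (h : (x.right : ℂ).im ≠ 0) : x.branch = 1 :=
  x.right_or.resolve_left fun h' => h (by simp [h'])

theorem branch_eq_zero_of_stem (h : 0 < x.stem) : x.branch = 0 :=
  x.branch_or_stem.resolve_right h.ne'

theorem isOpen_arc (j : Fin 3) (e : Bool) : IsOpen (arc j e) := by
  fin_cases j <;> cases e
  · exact isOpen_Ioo.preimage continuous_branch
  · exact isOpen_Ioi.preimage continuous_stem
  · exact isOpen_Iio.preimage (by fun_prop)
  · exact isOpen_Ioi.preimage (by fun_prop)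
  · exact isOpen_Iio.preimage (by fun_prop)
  · exact isOpen_Ioi.preimage (by fun_prop)

theorem height_image_stem : height '' {x | 0 < x.stem} = Ioc 0 (1 / 2) := by
  ext r
  constructor
  · rintro ⟨x, hx : 0 < x.stem, rfl⟩
    have hx' := branch_eq_zero_of_stem hx
    rw [height_eq_of_left_of_right (x.left_or.resolve_right (by norm_num [hx']))
      (x.right_or.resolve_right (by norm_num [hx']))]
    constructor <;> linarith [x.stem_mem.2]
  · rintro ⟨h, h'⟩
    refine ⟨⟨0, 2 * r, 1, 1, by simp, ⟨by linarith, by linarith⟩, by simp, by simp, by simp⟩, ?_⟩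
    simpa [height] using h

theorem height_image_branch : height '' {x | x.branch ∈ Ioo 0 1} = Ioo 0 1 := by
  ext r
  constructor
  · rintro ⟨x, hx : x.branch ∈ Ioo 0 1, rfl⟩
    rwa [height_eq_of_left_of_right (x.left_or.resolve_right (by linarith [hx.1]))
      (x.right_or.resolve_right hx.2.ne), x.branch_or_stem.resolve_left hx.1.ne', zero_div,
      add_zero]
  · rintro ⟨h, h'⟩
    refine ⟨⟨r, 0, 1, 1, ⟨by linarith, h'.le⟩, by simp, by simp, by simp, by simp⟩, ⟨h, h'⟩, ?_⟩
    simp [height]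

variable {P : Set ℝ}

theorem height_image_left (h0 : 0 ∉ P)
    (hP : ∀ r ∈ Ioo (-1) 1, ∃ c : Circle, (c : ℂ).re = r ∧ (c : ℂ).im ∈ P) :
    height '' {x | (x.left : ℂ).im ∈ P} = Ioo (-3) (-1) := by
  ext r
  constructor
  · rintro ⟨x, hx : (x.left : ℂ).im ∈ P, rfl⟩
    have hne : (x.left : ℂ).im ≠ 0 := fun h => h0 (h ▸ hx)
    have hre := circle_re_mem_Ioo hne
    rw [eq_leftLoop (branch_eq_neg_one_of_left hne), height_leftLoop]
    constructor <;> linarith [hre.1, hre.2]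
  · rintro ⟨h, h'⟩
    obtain ⟨c, hc, hcP⟩ := hP (r + 2) ⟨by linarith, by linarith⟩
    exact ⟨leftLoop c, hcP, by rw [height_leftLoop, hc]; ring⟩

theorem height_image_right (h0 : 0 ∉ P)
    (hP : ∀ r ∈ Ioo (-1) 1, ∃ c : Circle, (c : ℂ).re = r ∧ (c : ℂ).im ∈ P) :
    height '' {x | (x.right : ℂ).im ∈ P} = Ioo 1 3 := by
  ext r
  constructor
  · rintro ⟨x, hx : (x.right : ℂ).im ∈ P, rfl⟩
    have hne : (x.right : ℂ).im ≠ 0 := fun h => h0 (h ▸ hx)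
    have hre := circle_re_mem_Ioo hne
    rw [eq_rightLoop (branch_eq_one_of_right hne), height_rightLoop]
    constructor <;> linarith [hre.1, hre.2]
  · rintro ⟨h, h'⟩
    obtain ⟨c, hc, hcP⟩ := hP (2 - r) ⟨by linarith, by linarith⟩
    exact ⟨rightLoop c, hcP, by rw [height_rightLoop, hc]; ring⟩

/-- The heights along an arc. -/
def arcHeights : Fin 3 → Bool → Set ℝ
  | 0, true => Ioc 0 (1 / 2)
  | 0, false => Ioo 0 1
  | 1, _ => Ioo (-3) (-1)
  | 2, _ => Ioo 1 3

theorem height_image_arc (j : Fin 3) (e : Bool) : height '' arc j e = arcHeights j e := by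
  fin_cases j <;> cases e
  · exact height_image_branch
  · exact height_image_stem
  · exact height_image_left self_notMem_Iio fun _ => exists_circle_re_eq_im_neg
  · exact height_image_left self_notMem_Ioi fun _ => exists_circle_re_eq_im_pos
  · exact height_image_right self_notMem_Iio fun _ => exists_circle_re_eq_im_neg
  · exact height_image_right self_notMem_Ioi fun _ => exists_circle_re_eq_im_pos

theorem convex_height_image_arc (j : Fin 3) (e : Bool) : Convex ℝ (height '' arc j e) := by
  rw [height_image_arc]
  fin_cases j <;> cases e
  exacts [convex_Ioo _ _, convex_Ioc _ _, convex_Ioo _ _, convex_Ioo _ _, convex_Ioo _ _,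
    convex_Ioo _ _]

theorem exists_height_lt (j : Fin 3) (e : Bool) :
    ∃ x ∈ arc j e, ∃ y ∈ arc j !e, height x < height y := by
  obtain ⟨r, s, hr, hs, hrs⟩ : ∃ r s, r ∈ arcHeights j e ∧ s ∈ arcHeights j !e ∧ r < s := by
    fin_cases j
    · refine ⟨1 / 4, 1 / 2, ?_⟩
      cases e <;> norm_num [arcHeights]
    · exact ⟨-2.5, -2, by norm_num [arcHeights]⟩
    · exact ⟨2, 2.5, by norm_num [arcHeights]⟩
  rw [← height_image_arc] at hr hs
  obtain ⟨x, hx, rfl⟩ := hr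
  obtain ⟨y, hy, rfl⟩ := hs
  exact ⟨x, hx, y, hy, hrs⟩

theorem exists_mem_arc_of_branch_eq_neg_one (hx : x.branch = -1) (hy : y.branch = -1)
    (hne : x ≠ y) (h : height x = height y) : ∃ j e, x ∈ arc j e ∧ y ∈ arc j !e := by
  rw [eq_leftLoop hx, eq_leftLoop hy, height_leftLoop, height_leftLoop, sub_left_inj] at h
  rcases circle_eq_or_im_lt_of_re_eq h with hc | hc | hc
  · exact (hne ((eq_leftLoop hx).trans (hc ▸ (eq_leftLoop hy).symm))).elim
  · exact ⟨1, true, hc⟩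
  · exact ⟨1, false, hc⟩

theorem exists_mem_arc_of_branch_eq_one (hx : x.branch = 1) (hy : y.branch = 1)
    (hne : x ≠ y) (h : height x = height y) : ∃ j e, x ∈ arc j e ∧ y ∈ arc j !e := by
  rw [eq_rightLoop hx, eq_rightLoop hy, height_rightLoop, height_rightLoop, sub_right_inj] at h
  rcases circle_eq_or_im_lt_of_re_eq h with hc | hc | hc
  · exact (hne ((eq_rightLoop hx).trans (hc ▸ (eq_rightLoop hy).symm))).elim
  · exact ⟨2, true, hc⟩
  · exact ⟨2, false, hc⟩

theorem exists_mem_arc_of_height_eq (hne : x ≠ y) (h : height x = height y) :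
    ∃ j e, x ∈ arc j e ∧ y ∈ arc j !e := by
  by_cases hl : x.branch = -1
  · refine exists_mem_arc_of_branch_eq_neg_one hl ?_ hne h
    rwa [← height_le_neg_one_iff, ← h, height_le_neg_one_iff]
  by_cases hr : x.branch = 1
  · refine exists_mem_arc_of_branch_eq_one hr ?_ hne h
    rwa [← one_le_height_iff, ← h, one_le_height_iff]
  have hl' : y.branch ≠ -1 := by rwa [ne_eq, ← height_le_neg_one_iff, ← h, height_le_neg_one_iff]
  have hr' : y.branch ≠ 1 := by rwa [ne_eq, ← one_le_height_iff, ← h, one_le_height_iff]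
  have hxl := x.left_or.resolve_right hl
  have hxr := x.right_or.resolve_right hr
  have hyl := y.left_or.resolve_right hl'
  have hyr := y.right_or.resolve_right hr'
  rw [height_eq_of_left_of_right hxl hxr, height_eq_of_left_of_right hyl hyr] at h
  have hxy : ¬(x.branch = y.branch ∧ x.stem = y.stem) := fun hxy =>
    hne (BalloonModel.ext hxy.1 hxy.2 (hxl.trans hyl.symm) (hxr.trans hyr.symm))
  have hx1 := x.branch_mem.2.lt_of_ne hr
  have hy1 := y.branch_mem.2.lt_of_ne hr'
  rcases x.stem_mem.1.eq_or_lt with hx | hx <;> rcases y.stem_mem.1.eq_or_lt with hy | hy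
  · exact (hxy ⟨by linarith, by linarith⟩).elim
  · exact ⟨0, false, ⟨by linarith [branch_eq_zero_of_stem hy], hx1⟩, hy⟩
  · exact ⟨0, true, hx, ⟨by linarith [branch_eq_zero_of_stem hx], hy1⟩⟩
  · have := branch_eq_zero_of_stem hx
    have := branch_eq_zero_of_stem hy
    exact (hxy ⟨by linarith, by linarith⟩).elim

theorem floor_branch_of_mem_arc {j : Fin 3} {e : Bool} (hx : x ∈ arc j e) :
    ⌊x.branch⌋ = ![0, -1, 1] j := by
  fin_cases j <;> cases e
  · exact Int.floor_eq_zero_iff.2 ⟨le_of_lt hx.1, hx.2⟩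
  · simp [branch_eq_zero_of_stem hx]
  · norm_num [branch_eq_neg_one_of_left (ne_of_lt hx)]
  · norm_num [branch_eq_neg_one_of_left (ne_of_gt hx)]
  · simp [branch_eq_one_of_right (ne_of_lt hx)]
  · simp [branch_eq_one_of_right (ne_of_gt hx)]

theorem disjoint_arc (j : Fin 3) : Disjoint (arc j true) (arc j false) := by
  rw [disjoint_left]
  intro x hx hy
  fin_cases j
  · exact hy.1.ne' (branch_eq_zero_of_stem hx)
  · exact (show (x.left : ℂ).im < 0 from hy).not_gt hx
  · exact (show (x.right : ℂ).im < 0 from hy).not_gt hx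

theorem pairwise_disjoint_arc :
    Pairwise (Function.onFun Disjoint fun k : Fin 3 × Bool => arc k.1 k.2) := by
  rintro ⟨j, e⟩ ⟨k, f⟩ hne
  obtain rfl | hjk := eq_or_ne j k
  · obtain ⟨rfl, rfl⟩ | ⟨rfl, rfl⟩ : (e = true ∧ f = false) ∨ (e = false ∧ f = true) := by
      cases e <;> cases f <;> simp_all
    · exact disjoint_arc j
    · exact (disjoint_arc j).symm
  · have hinj : Function.Injective (![0, -1, 1] : Fin 3 → ℤ) := by decide
    refine disjoint_left.2 fun x hx hy => hjk (hinj ?_)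
    rw [← floor_branch_of_mem_arc hx, floor_branch_of_mem_arc hy]

end BalloonModel

open scoped ContinuousMap

section CircleContraction

/-- The point of the circle whose argument is `κ` times that of `c`; as `κ` runs from `1` to `0`
this contracts the circle without the point `-1` to the point `1`. -/
noncomputable def scaleArg (κ : ℝ) (c : Circle) : Circle := Circle.exp (κ * Complex.arg c)

theorem scaleArg_zero (c : Circle) : scaleArg 0 c = 1 := by simp [scaleArg]

theorem scaleArg_one (c : Circle) : scaleArg 1 c = c := by simp [scaleArg]

theorem scaleArg_apply_one (κ : ℝ) : scaleArg κ 1 = 1 := by simp [scaleArg]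

theorem re_le_re_scaleArg {κ : ℝ} (h : 0 ≤ κ) (h' : κ ≤ 1) (c : Circle) :
    (c : ℂ).re ≤ (scaleArg κ c : ℂ).re := by
  have re_exp (θ : ℝ) : (Circle.exp θ : ℂ).re = Real.cos |θ| := by
    rw [Circle.coe_exp, Complex.exp_ofReal_mul_I_re, Real.cos_abs]
  rw [scaleArg, ← Circle.exp_arg c, re_exp, Circle.exp_arg, re_exp, abs_mul, abs_of_nonneg h]
  exact Real.cos_le_cos_of_nonneg_of_le_pi (by positivity) (Complex.abs_arg_le_pi _)
    (mul_le_of_le_one_left (abs_nonneg _) h')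

theorem continuous_scaleArg {Z : Type*} [TopologicalSpace Z] {κ : Z → ℝ} {c : Z → Circle}
    (hκ : Continuous κ) (hc : Continuous c) (hne : ∀ z, (c z : ℂ).re ≠ -1) :
    Continuous fun z => scaleArg (κ z) (c z) := by
  have harg : Continuous fun z => Complex.arg (c z) := continuous_iff_continuousAt.2 fun z =>
    (Complex.continuousAt_arg (circle_mem_slitPlane_of_re_ne (hne z))).comp
      (f := fun z => (c z : ℂ)) (by fun_prop)
  exact Circle.exp.continuous.comp (hκ.mul harg)

end CircleContraction

namespace BalloonModel

variable {x y : BalloonModel} {s : ℝ}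

/-- The reflection of the model that exchanges its two balloons. -/
def mirror (x : BalloonModel) : BalloonModel where
  branch := -x.branch
  stem := x.stem
  left := x.right
  right := x.left
  branch_mem := ⟨neg_le_neg x.branch_mem.2, neg_le.1 x.branch_mem.1⟩
  stem_mem := x.stem_mem
  branch_or_stem := x.branch_or_stem.imp_left neg_eq_zero.2
  left_or := x.right_or.imp_right fun h => by rw [h]
  right_or := x.left_or.imp_right neg_eq_iff_eq_neg.2

theorem mirror_mirror (x : BalloonModel) : x.mirror.mirror = x :=
  BalloonModel.ext (neg_neg _) rfl rfl rfl

theorem mirror_leftLoop (c : Circle) : (leftLoop c).mirror = rightLoop c :=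
  BalloonModel.ext (neg_neg _) rfl rfl rfl

theorem height_mirror (x : BalloonModel) : height x.mirror = x.stem - height x := by
  simp only [height, mirror]
  ring

@[fun_prop]
theorem continuous_mirror : Continuous mirror :=
  continuous_induced_rng.2 <| continuous_branch.neg.prodMk <|
    continuous_stem.prodMk <| continuous_right.prodMk continuous_left

/-- A motion that drags the model onto its left balloon: until time `1` the right balloon contracts
to its base point, then everything on the branch path and the stem slides towards the left balloon,
and nothing moves after time `3`. It is not continuous at the point `-1` of the right balloon. -/
noncomputable def pull (s : ℝ) (x : BalloonModel) : BalloonModel where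
  branch := max (-1) (min x.branch (2 - s))
  stem := min x.stem (max 0 (2 - s))
  left := x.left
  right := scaleArg (max 0 (min 1 (1 - s))) x.right
  branch_mem := ⟨le_max_left _ _, max_le (by norm_num) (min_le_of_left_le x.branch_mem.2)⟩
  stem_mem := ⟨le_min x.stem_mem.1 (le_max_left _ _), min_le_of_left_le x.stem_mem.2⟩
  branch_or_stem := by
    rcases x.branch_or_stem with h | h
    · rcases le_total s 2 with hs | hs
      · simp [h, hs]
      · simp [hs, x.stem_mem.1]
    · simp [h]
  left_or := x.left_or.imp_right fun h => by simp [h]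
  right_or := by
    rcases x.right_or with h | h
    · exact .inl (by rw [h, scaleArg_apply_one])
    · rcases le_total s 1 with hs | hs
      · right
        rw [h, min_eq_left (by linarith)]
        norm_num
      · left
        rw [max_eq_left (min_le_of_right_le (by linarith)), scaleArg_zero]

theorem pull_of_nonpos (hs : s ≤ 0) (x : BalloonModel) : pull s x = x := by
  have hx := x.branch_mem
  have hx' := x.stem_mem.2
  refine BalloonModel.ext ?_ ?_ rfl ?_
  · change max (-1) (min x.branch (2 - s)) = x.branch
    rw [min_eq_left (by linarith [hx.2]), max_eq_right hx.1]
  · exact min_eq_left (le_max_of_le_right (by linarith))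
  · change scaleArg (max 0 (min 1 (1 - s))) x.right = x.right
    rw [min_eq_left (by linarith), max_eq_right zero_le_one, scaleArg_one]

theorem branch_pull_of_three_le (hs : 3 ≤ s) (x : BalloonModel) : (pull s x).branch = -1 :=
  max_eq_left (min_le_of_right_le (by linarith))

theorem pull_of_three_le (hs : 3 ≤ s) (x : BalloonModel) : pull s x = leftLoop x.left :=
  eq_leftLoop (branch_pull_of_three_le hs x)

theorem branch_pull_le (s : ℝ) (x : BalloonModel) : (pull s x).branch ≤ x.branch :=
  max_le x.branch_mem.1 (min_le_left _ _)

theorem stem_pull_le (s : ℝ) (x : BalloonModel) : (pull s x).stem ≤ x.stem := min_le_left _ _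

theorem re_right_le_pull (s : ℝ) (x : BalloonModel) :
    (x.right : ℂ).re ≤ ((pull s x).right : ℂ).re :=
  re_le_re_scaleArg (le_max_left _ _) (max_le zero_le_one (min_le_left _ _)) _

theorem height_pull_le (s : ℝ) (x : BalloonModel) : height (pull s x) ≤ height x := by
  have hl : (pull s x).left = x.left := rfl
  simp only [height, hl]
  linarith [branch_pull_le s x, stem_pull_le s x, re_right_le_pull s x]

theorem continuous_pull {Z : Type*} [TopologicalSpace Z] {t : Z → ℝ} {f : Z → BalloonModel}
    (ht : Continuous t) (hf : Continuous f) (hne : ∀ z, ((f z).right : ℂ).re ≠ -1) :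
    Continuous fun z => pull (t z) (f z) := by
  refine continuous_induced_rng.2 <| .prodMk ?_ <| .prodMk ?_ <| .prodMk ?_ ?_
  · exact continuous_const.max ((continuous_branch.comp hf).min (continuous_const.sub ht))
  · exact (continuous_stem.comp hf).min (continuous_const.max (continuous_const.sub ht))
  · exact (continuous_left.comp hf :)
  · exact continuous_scaleArg (by fun_prop) (continuous_right.comp hf) hne

/-- The mirror image of the motion `pull`, which drags the model onto its right balloon. -/
noncomputable def push (s : ℝ) (x : BalloonModel) : BalloonModel := (pull s x.mirror).mirror

theorem push_of_nonpos (hs : s ≤ 0) (x : BalloonModel) : push s x = x := by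
  rw [push, pull_of_nonpos hs, mirror_mirror]

theorem push_of_three_le (hs : 3 ≤ s) (x : BalloonModel) : push s x = rightLoop x.right := by
  rw [push, pull_of_three_le hs, mirror_leftLoop]
  rfl

theorem height_le_push_or_nonneg (s : ℝ) (x : BalloonModel) :
    height x ≤ height (push s x) ∨ 0 ≤ height (push s x) := by
  have hle := height_pull_le s x.mirror
  rw [height_mirror] at hle
  rw [push, height_mirror]
  rcases x.branch_or_stem with hb | hw
  · right
    have hr : x.mirror.right = 1 := x.left_or.resolve_right (by norm_num [hb])
    have hl : (pull s x.mirror).left = 1 := x.right_or.resolve_right (by norm_num [hb])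
    have hr' : (pull s x.mirror).right = 1 := (congr_arg _ hr).trans (scaleArg_apply_one _)
    rw [height_eq_of_left_of_right hl hr']
    have hbranch : x.mirror.branch = 0 := neg_eq_zero.2 hb
    linarith [branch_pull_le s x.mirror, (pull s x.mirror).stem_mem.1]
  · left
    linarith [(pull s x.mirror).stem_mem.1]

theorem continuous_push {Z : Type*} [TopologicalSpace Z] {t : Z → ℝ} {f : Z → BalloonModel}
    (ht : Continuous t) (hf : Continuous f) (hne : ∀ z, ((f z).left : ℂ).re ≠ -1) :
    Continuous fun z => push (t z) (f z) :=
  continuous_mirror.comp (continuous_pull ht (continuous_mirror.comp hf) hne)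

theorem height_mem_Icc (x : BalloonModel) : height x ∈ Icc (-3) 3 := by
  constructor
  · by_cases hx : x.branch = -1
    · rw [eq_leftLoop hx, height_leftLoop]
      linarith [(circle_re_mem_Icc x.left).1]
    · linarith [not_le.1 (height_le_neg_one_iff.not.2 hx)]
  · by_cases hx : x.branch = 1
    · rw [eq_rightLoop hx, height_rightLoop]
      linarith [(circle_re_mem_Icc x.right).1]
    · linarith [not_le.1 (one_le_height_iff.not.2 hx)]

theorem re_right_ne_of_height_lt (h : height x < height y) : (x.right : ℂ).re ≠ -1 := by
  intro hre
  have hx : x.branch = 1 := x.right_or.resolve_left fun h' => by norm_num [h'] at hre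
  rw [eq_rightLoop hx, height_rightLoop, hre] at h
  linarith [(height_mem_Icc y).2]

theorem re_left_ne_of_height_lt (h : height x < height y) : (y.left : ℂ).re ≠ -1 := by
  intro hre
  have hy : y.branch = -1 := y.left_or.resolve_left fun h' => by norm_num [h'] at hre
  rw [eq_leftLoop hy, height_leftLoop, hre] at h
  linarith [(height_mem_Icc x).1]

theorem height_pull_lt_push (h : height x < height y) (s : ℝ) :
    height (pull s x) < height (push (s - 3) y) := by
  rcases le_total s 3 with hs | hs
  · rw [push_of_nonpos (by linarith)]
    exact (height_pull_le s x).trans_lt h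
  · rcases height_le_push_or_nonneg (s - 3) y with hy | hy
    · exact (height_pull_le s x).trans_lt (h.trans_le hy)
    · linarith [height_le_neg_one_iff.2 (branch_pull_of_three_le hs x)]

theorem height_leftLoop_lt_rightLoop (c d : Circle) :
    height (leftLoop c) < height (rightLoop d) := by
  rw [height_leftLoop, height_rightLoop]
  linarith [(circle_re_mem_Icc c).2, (circle_re_mem_Icc d).2]

/-- The pairs of points of the model of which the second one is higher. -/
abbrev LowHigh : Type := {z : BalloonModel × BalloonModel | height z.1 < height z.2}

/-- The deformation of `LowHigh` that first pulls the lower point onto the left balloon and then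
pushes the higher point onto the right balloon. -/
noncomputable def slide : C(ℝ × LowHigh, LowHigh) where
  toFun p := ⟨(pull p.1 p.2.1.1, push (p.1 - 3) p.2.1.2), height_pull_lt_push p.2.2 p.1⟩
  continuous_toFun := by
    refine .subtype_mk (.prodMk ?_ ?_) _
    · exact continuous_pull (by fun_prop) (by fun_prop) fun p => re_right_ne_of_height_lt p.2.2
    · exact continuous_push (by fun_prop) (by fun_prop) fun p => re_left_ne_of_height_lt p.2.2

/-- The deformation `slide` retracts `LowHigh` onto the torus formed by the pairs of a point of the
left balloon and a point of the right balloon. -/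
noncomputable def lowHighEquivTorus : LowHigh ≃ₕ Circle × Circle where
  toFun := ⟨fun z => (z.1.1.left, z.1.2.right), by fun_prop⟩
  invFun := ⟨fun c => ⟨(leftLoop c.1, rightLoop c.2), height_leftLoop_lt_rightLoop _ _⟩,
    by fun_prop⟩
  left_inv := by
    refine .symm ⟨⟨slide.comp ⟨fun p => (6 * p.1, p.2), by fun_prop⟩, fun z => ?_, fun z => ?_⟩⟩
    · exact Subtype.ext (Prod.ext (pull_of_nonpos (by simp) _) (push_of_nonpos (by norm_num) _))
    · exact Subtype.ext (Prod.ext (pull_of_three_le (by norm_num) _)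
        (push_of_three_le (by norm_num) _))
  right_inv := .refl _

theorem hasPairedArcs_height : HasPairedArcs height arc where
  continuous := continuous_height
  isOpen_arc := isOpen_arc
  convex_image := convex_height_image_arc
  pairwise_disjoint := pairwise_disjoint_arc
  exists_lt := exists_height_lt
  exists_mem_of_eq _ _ := exists_mem_arc_of_height_eq
  isPathConnected_lt := isPathConnected_iff_pathConnectedSpace.2
    (pathConnectedSpace_of_homotopyEquiv lowHighEquivTorus)

end BalloonModel

section BalloonGraph

theorem mem_balloonGraph_two_iff {p : ℝ × ℝ} : p ∈ balloonGraph 2 ↔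
    (p.1 = 0 ∧ p.2 ∈ Icc (-1) 0) ∨ (p.2 ∈ Icc 0 1 ∧ p.1 = p.2) ∨ (p.2 ∈ Icc 0 1 ∧ p.1 = 2 * p.2) ∨
    (p.1 - 1) ^ 2 + (p.2 - 5 / 4) ^ 2 = (1 / 4) ^ 2 ∨
    (p.1 - 2) ^ 2 + (p.2 - 5 / 4) ^ 2 = (1 / 4) ^ 2 := by
  obtain ⟨a, b⟩ := p
  have hstem : (a, b) ∈ segment ℝ ((0 : ℝ), (-1 : ℝ)) (0, 0) ↔ a = 0 ∧ b ∈ Icc (-1) 0 := by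
    rw [← Prod.image_mk_segment_right, segment_eq_Icc (by norm_num)]
    simp [and_comm, eq_comm]
  have hbranch (i : ℝ) : (a, b) ∈ segment ℝ ((0 : ℝ), (0 : ℝ)) (i, 1) ↔
      b ∈ Icc 0 1 ∧ a = i * b := by
    rw [segment_eq_image]
    constructor
    · rintro ⟨t, ht, h⟩
      obtain ⟨rfl, rfl⟩ : t * i = a ∧ t = b := by simpa using h
      exact ⟨ht, mul_comm _ _⟩
    · rintro ⟨hb, rfl⟩
      exact ⟨b, hb, by simp [mul_comm]⟩
  have hIcc : Finset.Icc 1 2 = {1, 2} := by decide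
  simp only [balloonGraph, hIcc, mem_union, hstem, mem_iUnion, Finset.mem_insert,
    Finset.mem_singleton, exists_prop, exists_eq_or_imp, exists_eq_left, hbranch, mem_ofPred_eq,
    Nat.cast_one, Nat.cast_ofNat, one_mul, or_assoc]

theorem exists_circle_eq {a b : ℝ} (h : a ^ 2 + b ^ 2 = 1) :
    ∃ c : Circle, (c : ℂ).re = a ∧ (c : ℂ).im = b := by
  refine ⟨⟨⟨a, b⟩, mem_sphere_zero_iff_norm.2 ?_⟩, rfl, rfl⟩
  rw [Complex.norm_def, Complex.normSq_mk, ← sq, ← sq, h, Real.sqrt_one]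

end BalloonGraph

namespace BalloonModel

variable {x y : BalloonModel}

/-- The realization of the model in the plane, with the left balloon attached to `(1, 1)` and the
right balloon to `(2, 1)`. -/
noncomputable def plane (x : BalloonModel) : ℝ × ℝ :=
  ((3 * |x.branch| + x.branch) / 2 + ((x.left : ℂ).im + (x.right : ℂ).im) / 4,
    |x.branch| - x.stem + ((1 - (x.left : ℂ).re) + (1 - (x.right : ℂ).re)) / 4)

theorem continuous_plane : Continuous plane := by
  unfold plane
  fun_prop

theorem plane_leftLoop (c : Circle) :
    plane (leftLoop c) = (1 + (c : ℂ).im / 4, 5 / 4 - (c : ℂ).re / 4) := by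
  refine Prod.ext ?_ ?_ <;>
    simp only [plane, leftLoop, Circle.coe_one, Complex.one_re, Complex.one_im, abs_neg,
      abs_one] <;>
    ring

theorem plane_rightLoop (c : Circle) :
    plane (rightLoop c) = (2 + (c : ℂ).im / 4, 5 / 4 - (c : ℂ).re / 4) := by
  refine Prod.ext ?_ ?_ <;>
    simp only [plane, rightLoop, Circle.coe_one, Complex.one_re, Complex.one_im, abs_one] <;>
    ring

theorem plane_of_left_of_right (hl : x.left = 1) (hr : x.right = 1) :
    plane x = ((3 * |x.branch| + x.branch) / 2, |x.branch| - x.stem) := by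
  simp [plane, hl, hr]

theorem plane_mem_balloonGraph (x : BalloonModel) : plane x ∈ balloonGraph 2 := by
  rw [mem_balloonGraph_two_iff]
  by_cases hl : x.branch = -1
  · rw [eq_leftLoop hl, plane_leftLoop]
    right; right; right; left
    linarith [circle_re_sq_add_im_sq x.left]
  by_cases hr : x.branch = 1
  · rw [eq_rightLoop hr, plane_rightLoop]
    right; right; right; right
    linarith [circle_re_sq_add_im_sq x.right]
  rw [plane_of_left_of_right (x.left_or.resolve_right hl) (x.right_or.resolve_right hr)]
  have habs : |x.branch| ≤ 1 := abs_le.2 x.branch_mem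
  rcases x.branch_or_stem with h | h
  · left
    rw [h]
    simpa using x.stem_mem.symm
  · rcases abs_cases x.branch with ⟨h', -⟩ | ⟨h', -⟩
    · right; right; left
      rw [h, sub_zero, h']
      exact ⟨⟨h' ▸ abs_nonneg _, x.branch_mem.2⟩, by ring⟩
    · right; left
      rw [h, sub_zero]
      exact ⟨⟨abs_nonneg _, habs⟩, by linarith⟩

theorem exists_plane_eq {p : ℝ × ℝ} (hp : p ∈ balloonGraph 2) : ∃ x, plane x = p := by
  obtain ⟨a, b⟩ := p
  rcases mem_balloonGraph_two_iff.1 hp with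
    ⟨ha, hb, hb'⟩ | ⟨⟨hb, hb'⟩, ha⟩ | ⟨⟨hb, hb'⟩, ha⟩ | h | h <;> dsimp only at *
  · refine ⟨⟨0, -b, 1, 1, by simp, ⟨by linarith, by linarith⟩, by simp, by simp, by simp⟩, ?_⟩
    simp [plane, ha]
  · refine ⟨⟨-b, 0, 1, 1, ⟨by linarith, by linarith⟩, by simp, by simp, by simp, by simp⟩, ?_⟩
    rw [plane_of_left_of_right rfl rfl, abs_neg, abs_of_nonneg hb]
    exact Prod.ext (by linarith) (sub_zero b)
  · refine ⟨⟨b, 0, 1, 1, ⟨by linarith, hb'⟩, by simp, by simp, by simp, by simp⟩, ?_⟩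
    rw [plane_of_left_of_right rfl rfl, abs_of_nonneg hb]
    exact Prod.ext (by linarith) (sub_zero b)
  · obtain ⟨c, hre, him⟩ := exists_circle_eq (a := 5 - 4 * b) (b := 4 * (a - 1)) (by linarith)
    exact ⟨leftLoop c, by rw [plane_leftLoop, hre, him]; ext <;> ring⟩
  · obtain ⟨c, hre, him⟩ := exists_circle_eq (a := 5 - 4 * b) (b := 4 * (a - 2)) (by linarith)
    exact ⟨rightLoop c, by rw [plane_rightLoop, hre, him]; ext <;> ring⟩

theorem range_plane : range plane = balloonGraph 2 :=
  Subset.antisymm (range_subset_iff.2 plane_mem_balloonGraph) fun _ => exists_plane_eq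

theorem snd_plane_lt_one (hl : x.branch ≠ -1) (hr : x.branch ≠ 1) : (plane x).2 < 1 := by
  rw [plane_of_left_of_right (x.left_or.resolve_right hl) (x.right_or.resolve_right hr)]
  have : |x.branch| < 1 := abs_lt.2 ⟨x.branch_mem.1.lt_of_ne' hl, x.branch_mem.2.lt_of_ne hr⟩
  linarith [x.stem_mem.1]

theorem branch_eq_neg_one_iff : x.branch = -1 ↔ 1 ≤ (plane x).2 ∧ (plane x).1 < 3 / 2 := by
  refine ⟨fun h => ?_, fun ⟨h, h'⟩ => ?_⟩
  · rw [eq_leftLoop h, plane_leftLoop]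
    constructor <;> linarith [(circle_re_mem_Icc x.left).2, (circle_im_mem_Icc x.left).2]
  · by_contra hl
    have hr : x.branch = 1 := by_contra fun hr => (snd_plane_lt_one hl hr).not_ge h
    rw [eq_rightLoop hr, plane_rightLoop] at h'
    linarith [(circle_im_mem_Icc x.right).1]

theorem branch_eq_one_iff : x.branch = 1 ↔ 1 ≤ (plane x).2 ∧ 3 / 2 < (plane x).1 := by
  refine ⟨fun h => ?_, fun ⟨h, h'⟩ => ?_⟩
  · rw [eq_rightLoop h, plane_rightLoop]
    constructor <;> linarith [(circle_re_mem_Icc x.right).2, (circle_im_mem_Icc x.right).1]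
  · by_contra hr
    have hl : x.branch = -1 := by_contra fun hl => (snd_plane_lt_one hl hr).not_ge h
    exact h'.not_gt (branch_eq_neg_one_iff.1 hl).2

theorem injective_plane : Function.Injective plane := by
  intro x y h
  by_cases hl : x.branch = -1
  · have hl' : y.branch = -1 := by rwa [branch_eq_neg_one_iff, ← h, ← branch_eq_neg_one_iff]
    rw [eq_leftLoop hl, eq_leftLoop hl', plane_leftLoop, plane_leftLoop, Prod.mk.injEq] at h
    have hcircle : x.left = y.left := Circle.ext (Complex.ext (by linarith) (by linarith))
    rw [eq_leftLoop hl, eq_leftLoop hl', hcircle]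
  by_cases hr : x.branch = 1
  · have hr' : y.branch = 1 := by rwa [branch_eq_one_iff, ← h, ← branch_eq_one_iff]
    rw [eq_rightLoop hr, eq_rightLoop hr', plane_rightLoop, plane_rightLoop, Prod.mk.injEq] at h
    have hcircle : x.right = y.right := Circle.ext (Complex.ext (by linarith) (by linarith))
    rw [eq_rightLoop hr, eq_rightLoop hr', hcircle]
  have hl' : y.branch ≠ -1 := by rwa [ne_eq, branch_eq_neg_one_iff, ← h, ← branch_eq_neg_one_iff]
  have hr' : y.branch ≠ 1 := by rwa [ne_eq, branch_eq_one_iff, ← h, ← branch_eq_one_iff]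
  have hxl := x.left_or.resolve_right hl
  have hxr := x.right_or.resolve_right hr
  have hyl := y.left_or.resolve_right hl'
  have hyr := y.right_or.resolve_right hr'
  rw [plane_of_left_of_right hxl hxr, plane_of_left_of_right hyl hyr, Prod.mk.injEq] at h
  have hbranch : x.branch = y.branch := by
    rcases x.branch_or_stem with hx | hx
    · rw [hx, abs_zero] at h
      linarith [abs_nonneg y.branch, neg_abs_le y.branch]
    rcases y.branch_or_stem with hy | hy
    · rw [hy, abs_zero] at h
      linarith [abs_nonneg x.branch, neg_abs_le x.branch]
    · linarith
  rw [hbranch, sub_right_inj] at h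
  exact BalloonModel.ext hbranch h.2 (hxl.trans hyl.symm) (hxr.trans hyr.symm)

/-- The model is homeomorphic to the balloon graph. -/
noncomputable def homeomorphBalloonGraph : BalloonModel ≃ₜ balloonGraph 2 :=
  (continuous_plane.isClosedEmbedding injective_plane).isEmbedding.toHomeomorph.trans
    (.setCongr range_plane)

end BalloonModel

/-- The homeomorphism of configuration spaces induced by a homeomorphism. -/
def uconfCongr {X Y : Type*} [TopologicalSpace X] [TopologicalSpace Y] (e : X ≃ₜ Y) (n : ℕ) :
    UConf n X ≃ₜ UConf n Y :=
  Homeomorph.Quotient.congr ((Homeomorph.piCongrRight fun _ => e).subtype fun f =>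
    (e.injective.of_comp_iff f).symm) fun f g => exists_congr fun s => by
      exact (e.injective.comp_left.eq_iff (a := f.1) (b := g.1 ∘ s)).symm

/-- The 2-strand braid group of the balloon graph with 2 balloons is isomorphic to the
free product `F₃ ∗ ℤ²`. -/
theorem braid_group_two_balloon_graph_two (x : UConf 2 (balloonGraph 2)) :
    Nonempty (FundamentalGroup (UConf 2 (balloonGraph 2)) x ≃*
      Monoid.Coprod (FreeGroup (Fin 3)) (Multiplicative (ℤ × ℤ))) := by
  let f := uconfCongr BalloonModel.homeomorphBalloonGraph.symm 2
  let z : BalloonModel.LowHigh := BalloonModel.lowHighEquivTorus.symm (1, 1)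
  let φ := fundamentalGroupCongr f.toHomotopyEquiv x
  obtain ⟨ψ⟩ := BalloonModel.hasPairedArcs_height.nonempty_fundamentalGroup_mulEquiv (f x) z
  let χ := fundamentalGroupCongr BalloonModel.lowHighEquivTorus z
  obtain ⟨τ⟩ := nonempty_fundamentalGroup_torus_mulEquiv
  exact ⟨φ.trans (ψ.trans (.coprodCongr (.refl _) (χ.trans τ)))⟩
end

section
/- Let n ≥ 1 and let G be a finite connected simple graph on vertex set Fin k with at least one edge. Then the n-strand graph braid group B_n(|G|) = π₁(UC^n(|G|)) (at any basepoint) is a finitely presented group. -/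
/-- The geometric realization of a simple graph on `Fin k`: the union, over the edges
`{i, j}` of `G`, of the straight segments in `ℝ^{Fin k}` joining the standard basis
vectors `e_i` and `e_j`. -/
def graphRealization {k : ℕ} (G : SimpleGraph (Fin k)) : Set (Fin k → ℝ) :=
  ⋃ (i : Fin k) (j : Fin k) (_ : G.Adj i j),
    segment ℝ (Pi.single i (1 : ℝ)) (Pi.single j (1 : ℝ))

/-- A group is finitely presented if it is isomorphic to a quotient of a finitely
generated free group by the normal closure of a finite set of relators. -/
def GroupFP (G : Type*) [Group G] : Prop :=
  ∃ (S : Type) (_ : Fintype S) (R : Finset (FreeGroup S)),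
    Nonempty (PresentedGroup (R : Set (FreeGroup S)) ≃* G)

/-!
Suppose that a space `X` is stratified by a finite preorder `E`, and that the union of the strata
above any given one (its star) is open and simply connected. Any group-valued cocycle on the nerve
of `E` glues trivial bundles over the stars to a covering of `X`. The holonomy of the universal
cocycle is a homomorphism from `π₁ X` to a group given by one generator for each pair and one
relator for each chain of length two in `E`, and choosing paths inside the stars gives a left
inverse. So `π₁ X` is a retract of a finitely presented group, hence finitely presented.

A configuration of points of `ℝ^ι` is stratified by the way its points compare in each coordinate
and by the supports of its points. For subsets of `ℝ^ι` such as graphs, the star of an ordered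
configuration is open and, by linear interpolation, contractible. No nontrivial relabelling of a
configuration stays in the same star: whatever sorts a coordinate of the relabelled configuration
also sorts it at the centre of the star, and a family has only one sorted rearrangement. Hence the
stars of unordered configurations are homeomorphic to those of ordered ones.
-/

open CategoryTheory Set Topology

/-! ### Finitely presented groups -/

theorem groupFP_of_isFinitelyPresented (H : Type*) [Group H] [Group.IsFinitelyPresented H] :
    GroupFP H := by
  obtain ⟨n, s, hs, ⟨e⟩⟩ := Group.IsFinitelyPresented.exists_mulEquiv_presentedGroup (G := H)
  refine ⟨Fin n, inferInstance, hs.toFinset, ⟨?_⟩⟩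
  rw [hs.coe_toFinset]
  exact e.symm

-- The kernel of the retraction `φ` is normally generated by the elements `g⁻¹ * ψ (φ g)`, with
-- `g` running over a finite generating set.
theorem isFinitelyPresented_of_leftInverse {Γ H : Type*} [Group Γ] [Group H]
    [hΓ : Group.IsFinitelyPresented Γ] (φ : Γ →* H) (ψ : H →* Γ)
    (h : Function.LeftInverse φ ψ) : Group.IsFinitelyPresented H := by
  obtain ⟨n, π, hπ, -⟩ := hΓ.out
  let S : Set Γ := range fun i : Fin n ↦ (π (.of i))⁻¹ * ψ (φ (π (.of i)))
  refine .of_surjective φ h.surjective ⟨S, finite_range _, le_antisymm ?_ fun g hg ↦ ?_⟩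
  · refine Subgroup.normalClosure_le_normal ?_
    rintro _ ⟨i, rfl⟩
    simp [MonoidHom.mem_ker, h (φ _)]
  · obtain ⟨w, rfl⟩ := hπ g
    let mk := QuotientGroup.mk' (Subgroup.normalClosure S)
    have mk_retract : mk.comp π = mk.comp ((ψ.comp φ).comp π) := by
      ext i
      exact QuotientGroup.eq.2 (Subgroup.subset_normalClosure ⟨i, rfl⟩)
    rw [← QuotientGroup.eq_one_iff]
    calc mk (π w) = mk (ψ (φ (π w))) := DFunLike.congr_fun mk_retract w
      _ = 1 := by rw [MonoidHom.mem_ker.1 hg, map_one, map_one]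

/-! ### Path classes inside a set -/

section PathsIn

variable {X : Type*} [TopologicalSpace X]

/-- The path classes of `X` represented by a path that stays in `U`. -/
def pathsIn (U : Set X) : MorphismProperty (FundamentalGroupoid X) :=
  fun x y q ↦ ∃ γ : Path x.as y.as, (∀ t, γ t ∈ U) ∧ Path.Homotopic.Quotient.mk γ = q

variable {U V : Set X} {x y : FundamentalGroupoid X}

theorem pathsIn_mono (h : U ⊆ V) : pathsIn U ≤ pathsIn V := by
  rintro x y q ⟨γ, hγ, hq⟩
  exact ⟨γ, fun t ↦ h (hγ t), hq⟩

instance pathsIn_isStableUnderComposition (U : Set X) :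
    (pathsIn U).IsStableUnderComposition where
  comp_mem := by
    rintro x y z _ _ ⟨γ, hγ, rfl⟩ ⟨δ, hδ, rfl⟩
    refine ⟨γ.trans δ, fun t ↦ ?_, Path.Homotopic.Quotient.mk_trans γ δ⟩
    rw [Path.trans_apply]
    split_ifs <;> apply_assumption

theorem pathsIn_target_mem {q : x ⟶ y} (hq : pathsIn U q) : y.as ∈ U := by
  obtain ⟨γ, hγ, -⟩ := hq
  simpa using hγ 1

theorem exists_pathsIn (hU : IsPathConnected U) (hx : x.as ∈ U) (hy : y.as ∈ U) :
    ∃ q : x ⟶ y, pathsIn U q := by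
  obtain ⟨γ, hγ⟩ := hU.joinedIn _ hx _ hy
  exact ⟨.mk γ, γ, hγ, rfl⟩

theorem eq_of_pathsIn (hU : IsSimplyConnected U) {q q' : x ⟶ y} (hq : pathsIn U q)
    (hq' : pathsIn U q') : q = q' := by
  obtain ⟨γ, hγ, rfl⟩ := hq
  obtain ⟨γ', hγ', rfl⟩ := hq'
  have := hU.simplyConnectedSpace
  let lift (δ : Path x.as y.as) (hδ : ∀ t, δ t ∈ U) :
      Path (⟨x.as, by simpa using hδ 0⟩ : U) ⟨y.as, by simpa using hδ 1⟩ :=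
    { toFun t := ⟨δ t, hδ t⟩
      source' := by simp
      target' := by simp }
  exact Path.Homotopic.Quotient.eq.2 <|
    (SimplyConnectedSpace.paths_homotopic (lift γ hγ) (lift γ' hγ')).map
      ⟨Subtype.val, continuous_subtype_val⟩

theorem prop_mk_cast_iff (W : MorphismProperty (FundamentalGroupoid X)) {x y x' y' : X}
    (γ : Path x y) (hx : x' = x) (hy : y' = y) :
    W (X := .mk x') (Y := .mk y') (.mk (γ.cast hx hy)) ↔ W (X := .mk x) (Y := .mk y) (.mk γ) := by
  subst hx hy
  rfl

-- For a path `γ`, whether the class of `γ` restricted to `[0, t]` satisfies `W` is locally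
-- constant in `t`.
theorem eq_top_of_forall_pathsIn {W : MorphismProperty (FundamentalGroupoid X)}
    [W.IsStableUnderComposition] (hW : W.StableUnderInverse) {U : X → Set X}
    (hU : ∀ x, U x ∈ 𝓝 x)
    (h : ∀ ⦃x y : FundamentalGroupoid X⦄ (q : x ⟶ y), pathsIn (U x.as) q → W q) : W = ⊤ := by
  ext ⟨x⟩ ⟨y⟩ q
  simp only [MorphismProperty.top_apply, iff_true]
  induction q using Path.Homotopic.Quotient.ind with | mk γ => ?_
  let cls (s t : unitInterval) : FundamentalGroupoid.mk (γ s) ⟶ FundamentalGroupoid.mk (γ t) :=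
    .mk (γ.subpath s t)
  have cls_comp (r s t : unitInterval) : cls r s ≫ cls s t = cls r t :=
    Path.Homotopic.Quotient.eq.2 ⟨Path.Homotopy.subpathTransSubpath γ r s t⟩
  have cls_symm (s t : unitInterval) (hst : W (cls s t)) : W (cls t s) := by
    have : W (inv (cls s t)) := hW (asIso (cls s t)) hst
    rwa [IsIso.inv_eq_of_hom_inv_id ((cls_comp s t s).trans _)] at this
    exact congrArg _ (γ.subpath_self s)
  have cls_near (s : unitInterval) : ∀ᶠ t in 𝓝 s, W (cls s t) := by
    filter_upwards [ordConnectedComponent_mem_nhds.2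
      (γ.continuous.continuousAt.preimage_mem_nhds (hU (γ s)))] with t ht
    refine h _ ⟨γ.subpath s t, fun r ↦ ?_, rfl⟩
    have hr : γ.subpath s t r ∈ γ '' uIcc s t := γ.range_subpath s t ▸ mem_range_self r
    exact image_subset_iff.2 ht hr
  have locallyConstant : IsLocallyConstant fun t ↦ W (cls 0 t) := by
    refine (IsLocallyConstant.iff_eventually_eq _).2 fun s ↦ ?_
    filter_upwards [cls_near s] with t ht
    refine propext ⟨fun h0 ↦ ?_, fun h0 ↦ ?_⟩
    · exact cls_comp 0 t s ▸ W.comp_mem _ _ h0 (cls_symm s t ht)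
    · exact cls_comp 0 s t ▸ W.comp_mem _ _ h0 ht
  have whole : W (cls 0 1) :=
    locallyConstant.apply_eq_of_preconnectedSpace 0 1 ▸ (cls_near 0).self_of_nhds
  exact (prop_mk_cast_iff W γ γ.source γ.target).1 (γ.subpath_zero_one ▸ whole)

end PathsIn

/-! ### Cocycles on a preorder and their transport functors -/

/-- A `1`-cocycle on the nerve of the preorder `E` with values in the group `Γ`. Only the values
`c a b` with `a ≤ b` are meaningful. -/
structure OrderCocycle (E Γ : Type*) [Preorder E] [Group Γ] where
  toFun : E → E → Γ
  mul_of_le' : ∀ {a b c : E}, a ≤ b → b ≤ c → toFun b c * toFun a b = toFun a c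

namespace OrderCocycle

variable {E Γ : Type*} [Preorder E] [Group Γ]

instance : CoeFun (OrderCocycle E Γ) fun _ ↦ E → E → Γ := ⟨toFun⟩

variable (c : OrderCocycle E Γ)

theorem mul_of_le {i j k : E} (hij : i ≤ j) (hjk : j ≤ k) : c j k * c i j = c i k :=
  c.mul_of_le' hij hjk

@[simp]
theorem self_eq_one (i : E) : c i i = 1 := by
  simpa using c.mul_of_le le_rfl (le_refl i)

theorem inv_mul_of_le {i j k l : E} (hik : i ≤ k) (hjk : j ≤ k) (hkl : k ≤ l) :
    (c j l)⁻¹ * c i l = (c j k)⁻¹ * c i k := by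
  rw [← c.mul_of_le hik hkl, ← c.mul_of_le hjk hkl]
  group

variable {X : Type*} [TopologicalSpace X] {p : X → E} [TopologicalSpace Γ] [DiscreteTopology Γ]

/-- The principal `Γ`-bundle of a cocycle over a space `X` stratified by `p : X → E`: it is
trivial over each open star `p ⁻¹' Ici i`, with locally constant transition functions. -/
def bundle (hp : ∀ i, IsOpen (p ⁻¹' Ici i)) : FiberBundleCore E X Γ where
  baseSet i := p ⁻¹' Ici i
  isOpen_baseSet := hp
  indexAt := p
  mem_baseSet_at _ := le_rfl
  coordChange i j x v := (c j (p x))⁻¹ * c i (p x) * v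
  coordChange_self _ _ _ _ := by simp
  continuousOn_coordChange i j := by
    rintro ⟨x, v⟩ ⟨⟨hi, hj⟩, -⟩
    refine ContinuousAt.continuousWithinAt ?_
    have hx : ∀ᶠ y in 𝓝 (x, v),
        (c j (p x))⁻¹ * c i (p x) * y.2 = (c j (p y.1))⁻¹ * c i (p y.1) * y.2 := by
      filter_upwards [continuousAt_fst ((hp (p x)).mem_nhds le_rfl)] with y hy
      rw [c.inv_mul_of_le hi hj hy]
    exact ContinuousAt.congr (by fun_prop) hx
  coordChange_comp _ _ _ _ _ _ := by group

variable (hp : ∀ i, IsOpen (p ⁻¹' Ici i))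

theorem isCoveringMap_proj : IsCoveringMap (c.bundle hp).proj :=
  FiberBundle.isCoveringMap (F := Γ) (E := (c.bundle hp).Fiber)

variable {x y z : FundamentalGroupoid X}

/-- Parallel transport in the bundle of a cocycle, all fibres being identified with `Γ`. -/
noncomputable def transport (q : x ⟶ y) (v : Γ) : Γ :=
  ((c.isCoveringMap_proj hp).monodromy q ⟨⟨x.as, v⟩, rfl⟩).1.2

theorem monodromy_mk (q : x ⟶ y) (v : Γ) :
    (c.isCoveringMap_proj hp).monodromy q ⟨⟨x.as, v⟩, rfl⟩ =
      ⟨⟨y.as, c.transport hp q v⟩, rfl⟩ := by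
  have eta (e : (c.bundle hp).proj ⁻¹' {y.as}) : e = ⟨⟨y.as, e.1.2⟩, rfl⟩ := by
    obtain ⟨⟨z, w⟩, hz : z = y.as⟩ := e
    subst hz
    rfl
  exact eta _

theorem transport_id (v : Γ) : c.transport hp (𝟙 x) v = v := by
  have := congrFun (c.isCoveringMap_proj hp).monodromy_refl ⟨⟨x.as, v⟩, rfl⟩
  exact congrArg (fun e ↦ e.1.2) this

theorem transport_comp (q : x ⟶ y) (q' : y ⟶ z) (v : Γ) :
    c.transport hp (q ≫ q') v = c.transport hp q' (c.transport hp q v) := by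
  have := (c.isCoveringMap_proj hp).monodromy_trans_apply q q' ⟨⟨x.as, v⟩, rfl⟩
  rw [c.monodromy_mk hp q] at this
  exact congrArg (fun e ↦ e.1.2) this

-- Over the star of `p x`, the section with constant value `v` in the trivialization of index
-- `p x` lifts any path starting at `x`.
theorem transport_of_pathsIn {q : x ⟶ y} (hq : pathsIn (p ⁻¹' Ici (p x.as)) q) (v : Γ) :
    c.transport hp q v = c (p x.as) (p y.as) * v := by
  obtain ⟨γ, hγ, rfl⟩ := hq
  let triv := (c.bundle hp).localTriv (p x.as)
  have symm_apply (z : X) :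
      triv.toOpenPartialHomeomorph.symm (z, v) = ⟨z, c (p x.as) (p z) * v⟩ := by
    refine ((c.bundle hp).localTriv_symm_apply _ _).trans ?_
    simp [bundle]
  let lift : Path (X := (c.bundle hp).TotalSpace) ⟨x.as, v⟩ ⟨y.as, c (p x.as) (p y.as) * v⟩ :=
    { toFun t := triv.toOpenPartialHomeomorph.symm (γ t, v)
      continuous_toFun :=
        triv.toOpenPartialHomeomorph.continuousOn_symm.comp_continuous (by fun_prop)
          fun t ↦ triv.mem_target.2 (hγ t)
      source' := by simp [symm_apply]
      target' := by simp [symm_apply] }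
  have := (c.isCoveringMap_proj hp).monodromy_eq_of_map_eq (γ := .mk γ)
    (ex := ⟨⟨x.as, v⟩, rfl⟩) (ey := ⟨⟨y.as, c (p x.as) (p y.as) * v⟩, rfl⟩) (.mk lift) ?_
  · exact congrArg (fun e ↦ e.1.2) this
  · refine congrArg Path.Homotopic.Quotient.mk (Path.ext (funext fun t ↦ ?_))
    exact congrArg Bundle.TotalSpace.proj (symm_apply (γ t))

/-- Transport as a functor to types. -/
noncomputable def transportFunctor : FundamentalGroupoid X ⥤ Type _ where
  obj _ := Γ
  map q := ↾(c.transport hp q)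
  map_id _ := by
    ext v
    exact c.transport_id hp v
  map_comp q q' := by
    ext v
    exact c.transport_comp hp q q' v

theorem transport_mul (q : x ⟶ y) (v w : Γ) :
    c.transport hp q (v * w) = c.transport hp q v * w := by
  let mulRight (x : FundamentalGroupoid X) :
      (c.transportFunctor hp).obj x ⟶ (c.transportFunctor hp).obj x := ↾((· * w) : Γ → Γ)
  have natural : MorphismProperty.naturalityProperty mulRight = ⊤ := by
    refine eq_top_of_forall_pathsIn
      (MorphismProperty.naturalityProperty.stableUnderInverse mulRight)
      (U := fun x ↦ p ⁻¹' Ici (p x)) (fun x ↦ (hp _).mem_nhds le_rfl) fun x y q hq ↦ ?_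
    ext (v : Γ)
    change c.transport hp q v * w = c.transport hp q (v * w)
    simp only [c.transport_of_pathsIn hp hq, mul_assoc]
  have := natural.ge q trivial
  exact (congrArg (fun f ↦ f v) this).symm

/-- The holonomy of the bundle of a cocycle: transport is left multiplication by an element of
`Γ`, and composition of paths corresponds to multiplication in `SingleObj Γ`. -/
noncomputable def holonomy : FundamentalGroupoid X ⥤ SingleObj Γ where
  obj _ := SingleObj.star Γ
  map q := c.transport hp q 1
  map_id _ := c.transport_id hp 1
  map_comp q q' := by
    rw [transport_comp, SingleObj.comp_as_mul, ← c.transport_mul, one_mul]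

theorem holonomy_map_of_pathsIn {q : x ⟶ y} (hq : pathsIn (p ⁻¹' Ici (p x.as)) q) :
    (c.holonomy hp).map q = c (p x.as) (p y.as) := by
  rw [← mul_one (c.toFun _ _)]
  exact c.transport_of_pathsIn hp hq 1

end OrderCocycle

/-! ### The fundamental group of a stratified space -/

section NerveGroup

variable (E : Type*) [Preorder E]

/-- The relators of `NerveGroup E`, one for each `2`-simplex of the nerve of `E`. -/
def nerveRelators : Set (FreeGroup (E × E)) :=
  (fun t : E × E × E ↦ .of (t.2.1, t.2.2) * .of (t.1, t.2.1) * (.of (t.1, t.2.2))⁻¹) ''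
    {t | t.1 ≤ t.2.1 ∧ t.2.1 ≤ t.2.2}

/-- The group generated by the values of a universal `1`-cocycle on the nerve of the preorder `E`.
The generators `(i, j)` with `¬ i ≤ j` are free. -/
abbrev NerveGroup : Type _ := PresentedGroup (nerveRelators E)

instance [Finite E] : Finite (nerveRelators E) := (toFinite _).image _

/-- The universal `1`-cocycle on the nerve of `E`. -/
def nerveCocycle : OrderCocycle E (NerveGroup E) where
  toFun i j := .of (i, j)
  mul_of_le' {i j k} hij hjk := by
    rw [← mul_inv_eq_one]
    exact PresentedGroup.one_of_mem ⟨(i, j, k), ⟨hij, hjk⟩, rfl⟩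

namespace OrderCocycle

variable {E} {H : Type*} [Group H] (r : OrderCocycle E H)

/-- The homomorphism out of `NerveGroup E` classifying a cocycle. -/
def lift : NerveGroup E →* H :=
  PresentedGroup.toGroup (f := fun e ↦ r e.1 e.2) <| by
    rintro _ ⟨⟨i, j, k⟩, ⟨hij, hjk⟩, rfl⟩
    simp [r.mul_of_le hij hjk]

@[simp]
theorem lift_nerveCocycle (i j : E) : r.lift (nerveCocycle E i j) = r i j :=
  PresentedGroup.toGroup.of _

end OrderCocycle

end NerveGroup

theorem exists_functor_singleObj_end {𝒢 : Type*} [Groupoid 𝒢] (x : 𝒢) :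
    ∃ R : 𝒢 ⥤ SingleObj (End x), ∀ g : End x, R.map g = g := by
  classical
  let path (y : 𝒢) (h : Nonempty (x ⟶ y)) : x ⟶ y :=
    if hxy : x = y then eqToHom hxy else h.some
  let conj {y z : 𝒢} (q : y ⟶ z) : x ⟶ x :=
    if h : Nonempty (x ⟶ y) then path y h ≫ q ≫ inv (path z (h.map (· ≫ q))) else 𝟙 x
  have conj_id (y : 𝒢) : conj (𝟙 y) = 𝟙 x := by simp [conj]
  have conj_comp {y z w : 𝒢} (q : y ⟶ z) (q' : z ⟶ w) : conj (q ≫ q') = conj q ≫ conj q' := by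
    by_cases h : Nonempty (x ⟶ y)
    · have h' : Nonempty (x ⟶ z) := h.map (· ≫ q)
      simp [conj, h, h']
    · have h' : ¬ Nonempty (x ⟶ z) := fun h' ↦ h (h'.map (· ≫ inv q))
      simp [conj, h, h']
  let R : 𝒢 ⥤ SingleObj (End x) :=
    { obj _ := SingleObj.star _
      map q := conj q
      map_id := conj_id
      map_comp := conj_comp }
  refine ⟨R, fun g ↦ ?_⟩
  simp [R, conj, path, show Nonempty (x ⟶ x) from ⟨𝟙 x⟩]

section Stratification

variable {X E : Type*} [TopologicalSpace X] [Preorder E] {p : X → E}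

-- `l x` is the value of `R` on a path in the star of `p x` from a base point of the star to `x`.
theorem exists_orderCocycle_of_functor (hsc : ∀ i, IsSimplyConnected (p ⁻¹' Ici i))
    {H : Type*} [Group H] (R : FundamentalGroupoid X ⥤ SingleObj H) :
    ∃ (r : OrderCocycle E H) (l : X → H), ∀ ⦃x y : FundamentalGroupoid X⦄ (q : x ⟶ y),
      pathsIn (p ⁻¹' Ici (p x.as)) q → l y.as * r (p x.as) (p y.as) = R.map q * l x.as := by
  choose base hbase using fun i ↦ (hsc i).nonempty
  have star_subset {i j : E} (h : i ≤ j) : p ⁻¹' Ici j ⊆ p ⁻¹' Ici i :=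
    preimage_mono (Ici_subset_Ici.2 h)
  have exists_path {i : E} {x y : X} (hx : i ≤ p x) (hy : i ≤ p y) :=
    exists_pathsIn (hsc i).isPathConnected (x := .mk x) (y := .mk y) hx hy
  have exists_value (i j : E) : ∃ g : H, ∀ t : FundamentalGroupoid.mk (base i) ⟶ .mk (base j),
      pathsIn (p ⁻¹' Ici i) t → R.map t = g := by
    by_cases h : ∃ t : FundamentalGroupoid.mk (base i) ⟶ .mk (base j), pathsIn (p ⁻¹' Ici i) t
    · obtain ⟨t, ht⟩ := h
      exact ⟨R.map t, fun t' ht' ↦ by rw [eq_of_pathsIn (hsc i) ht' ht]⟩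
    · exact ⟨1, fun t ht ↦ (h ⟨t, ht⟩).elim⟩
  choose r hr using exists_value
  choose s hs using fun x ↦ exists_path (hbase (p x)) (le_refl (p x))
  refine ⟨⟨r, fun {i j k} hij hjk ↦ ?_⟩, fun x ↦ R.map (s x), fun x y q hq ↦ ?_⟩
  · obtain ⟨t, ht⟩ := exists_path (hbase i) (hij.trans (hbase j))
    obtain ⟨t', ht'⟩ := exists_path (hbase j) (hjk.trans (hbase k))
    have htt' := (pathsIn (p ⁻¹' Ici i)).comp_mem t t' ht (pathsIn_mono (star_subset hij) _ ht')
    rw [← hr i j t ht, ← hr j k t' ht', ← hr i k _ htt', R.map_comp, SingleObj.comp_as_mul]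
  · have hxy : p x.as ≤ p y.as := pathsIn_target_mem (U := p ⁻¹' Ici (p x.as)) hq
    obtain ⟨t, ht⟩ := exists_path (hbase (p x.as)) (hxy.trans (hbase (p y.as)))
    have commutes : t ≫ s y.as = s x.as ≫ q := eq_of_pathsIn (hsc (p x.as))
      ((pathsIn _).comp_mem _ _ ht (pathsIn_mono (star_subset hxy) _ (hs y.as)))
      ((pathsIn _).comp_mem _ _ (hs x.as) hq)
    change R.map (s y.as) * r _ _ = R.map q * R.map (s x.as)
    rw [← hr _ _ t ht, ← SingleObj.comp_as_mul, ← SingleObj.comp_as_mul, ← R.map_comp,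
      ← R.map_comp, commutes]

theorem isFinitelyPresented_fundamentalGroup_of_stratification [Finite E]
    (hopen : ∀ i, IsOpen (p ⁻¹' Ici i)) (hsc : ∀ i, IsSimplyConnected (p ⁻¹' Ici i)) (x₀ : X) :
    Group.IsFinitelyPresented (FundamentalGroup X x₀) := by
  let _ : TopologicalSpace (NerveGroup E) := ⊥
  have : DiscreteTopology (NerveGroup E) := ⟨rfl⟩
  let T := (nerveCocycle E).holonomy hopen
  obtain ⟨R, hR⟩ := exists_functor_singleObj_end (FundamentalGroupoid.mk x₀)
  obtain ⟨r, l, hl⟩ := exists_orderCocycle_of_functor hsc R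
  let gauge (x : FundamentalGroupoid X) : (T ⋙ r.lift.toFunctor).obj x ⟶ R.obj x := l x.as
  have natural : MorphismProperty.naturalityProperty gauge = ⊤ := by
    refine eq_top_of_forall_pathsIn
      (MorphismProperty.naturalityProperty.stableUnderInverse gauge)
      (U := fun x ↦ p ⁻¹' Ici (p x)) (fun x ↦ (hopen _).mem_nhds le_rfl) fun x y q hq ↦ ?_
    have lift_T : r.lift (T.map q) = r (p x.as) (p y.as) := by
      rw [OrderCocycle.holonomy_map_of_pathsIn _ hopen hq, r.lift_nerveCocycle]
    exact (congrArg (l y.as * ·) lift_T).trans (hl q hq)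
  let ψ : FundamentalGroup X x₀ →* NerveGroup E :=
    (SingleObj.toEnd _).symm.toMonoidHom.comp (T.mapEnd (FundamentalGroupoid.mk x₀))
  refine isFinitelyPresented_of_leftInverse ((MulAut.conj (l x₀)).toMonoidHom.comp r.lift) ψ
    fun g ↦ ?_
  have : l x₀ * r.lift (ψ g) = g * l x₀ :=
    (natural.ge g trivial).trans (congrArg (· * l x₀) (hR g))
  exact mul_inv_eq_of_eq_mul this

end Stratification

/-! ### Order patterns -/

section OrderPattern

variable {κ ι : Type*}

/-- The possible order patterns of families of points of `ℝ^ι`: which points are less than which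
in each coordinate, and which coordinates of the points are positive. They are ordered by
implication, so that a limit of families of a given pattern has a smaller or equal pattern. -/
abbrev OrderPattern (κ ι : Type*) : Type _ :=
  (κ → κ → ι → Prop) × (κ → ι → Prop)

/-- The order pattern of a family of points. -/
def orderPattern (v : κ → ι → ℝ) : OrderPattern κ ι :=
  (fun i j a ↦ v i a < v j a, fun i a ↦ 0 < v i a)

theorem orderPattern_le_iff {v w : κ → ι → ℝ} : orderPattern v ≤ orderPattern w ↔
    (∀ i j a, v i a < v j a → w i a < w j a) ∧ ∀ i a, 0 < v i a → 0 < w i a :=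
  Iff.rfl

theorem orderPattern_comp_le {v w : κ → ι → ℝ} (h : orderPattern v ≤ orderPattern w)
    (σ : κ → κ) : orderPattern (v ∘ σ) ≤ orderPattern (w ∘ σ) :=
  ⟨fun i j ↦ h.1 (σ i) (σ j), fun i ↦ h.2 (σ i)⟩

theorem isOpen_setOf_orderPattern_le [Finite κ] [Finite ι] (v : κ → ι → ℝ) :
    IsOpen {w | orderPattern v ≤ orderPattern w} := by
  simp only [orderPattern_le_iff, ofPred_and, ofPred_forall]
  refine .inter ?_ ?_
  · exact isOpen_iInter_of_finite fun i ↦ isOpen_iInter_of_finite fun j ↦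
      isOpen_iInter_of_finite fun a ↦ isOpen_iInter_of_finite fun _ ↦
        isOpen_lt (by fun_prop) (by fun_prop)
  · exact isOpen_iInter_of_finite fun i ↦ isOpen_iInter_of_finite fun a ↦
      isOpen_iInter_of_finite fun _ ↦ isOpen_lt (by fun_prop) (by fun_prop)

theorem convex_setOf_orderPattern_le (v : κ → ι → ℝ) :
    Convex ℝ {w | orderPattern v ≤ orderPattern w} := by
  refine convex_iff_forall_pos.2 fun w hw w' hw' s t hs ht _ ↦ ⟨fun i j a h ↦ ?_, fun i a h ↦ ?_⟩
  · exact add_lt_add (mul_lt_mul_of_pos_left (hw.1 i j a h) hs)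
      (mul_lt_mul_of_pos_left (hw'.1 i j a h) ht)
  · exact add_pos (mul_pos hs (hw.2 i a h)) (mul_pos ht (hw'.2 i a h))

theorem injective_of_orderPattern_le {v w : κ → ι → ℝ} (h : orderPattern v ≤ orderPattern w)
    (hv : Function.Injective v) : Function.Injective w := by
  intro i j hij
  refine hv (funext fun a ↦ le_antisymm ?_ ?_) <;> refine not_lt.1 fun hlt ↦ ?_
  · exact (h.1 j i a hlt).ne (congrFun hij.symm a)
  · exact (h.1 i j a hlt).ne (congrFun hij a)

theorem comp_symm_eq_of_lt_imp_lt {α β : Type*} [LinearOrder α] [LinearOrder β] {n : ℕ}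
    {f : Fin n → α} {g : Fin n → β} {σ : Equiv.Perm (Fin n)}
    (h : ∀ i j, f i < f j → g i < g j) (hσ : ∀ i j, f i < f j → g (σ i) < g (σ j)) :
    f ∘ σ.symm = f := by
  let τ := Tuple.sort g
  have mono_τ : Monotone (f ∘ τ) := fun i j hij ↦
    not_lt.1 fun hlt ↦ (h _ _ hlt).not_ge (Tuple.monotone_sort g hij)
  have mono_σ : Monotone (f ∘ (τ.trans σ.symm : Equiv.Perm (Fin n))) := fun i j hij ↦
    not_lt.1 fun hlt ↦ (hσ _ _ hlt).not_ge (by simpa using! Tuple.monotone_sort g hij)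
  funext i
  simpa using congrFun (Tuple.unique_monotone mono_σ mono_τ) (τ.symm i)

theorem perm_eq_one_of_orderPattern_le {n : ℕ} {v w : Fin n → ι → ℝ} (hv : Function.Injective v)
    {σ : Equiv.Perm (Fin n)} (h : orderPattern v ≤ orderPattern w)
    (hσ : orderPattern v ≤ orderPattern (w ∘ σ)) : σ = 1 := by
  have comp_symm : v ∘ σ.symm = v := funext fun i ↦ funext fun a ↦
    congrFun (comp_symm_eq_of_lt_imp_lt (f := (v · a)) (g := (w · a))
      (fun i j ↦ h.1 i j a) fun i j ↦ hσ.1 i j a) i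
  ext i
  simpa using (congrArg Fin.val (hv (congrFun comp_symm (σ i)))).symm

end OrderPattern

/-! ### Configuration spaces -/

theorem isSimplyConnected_image_of_injOn {X Y : Type*} [TopologicalSpace X] [TopologicalSpace Y]
    {f : X → Y} (hf : Continuous f) (hf' : IsOpenMap f) {s : Set X} (hs : IsOpen s)
    (hinj : InjOn f s) (hsc : IsSimplyConnected s) : IsSimplyConnected (f '' s) := by
  have embedding : IsOpenEmbedding (s.domRestrict f) :=
    .of_continuous_injective_isOpenMap (hf.comp continuous_subtype_val)
      (injOn_iff_injective.1 hinj) (hf'.domRestrict hs)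
  have univ_sc : IsSimplyConnected (univ : Set s) := by
    rw [← IsEmbedding.subtypeVal.isSimplyConnected_image]
    simpa using hsc
  simpa [range_domRestrict] using embedding.isEmbedding.isSimplyConnected_image.2 univ_sc

/-- A subset `X` of `ℝ^ι` is support-convex if it contains the segment joining two of its points
as soon as every coordinate that is positive at the first is positive at the second. Convex sets
and simplicial complexes in barycentric coordinates have this property. -/
def IsSupportConvex {ι : Type*} (X : Set (ι → ℝ)) : Prop :=
  ∀ x ∈ X, ∀ y ∈ X, (∀ a, 0 < x a → 0 < y a) → segment ℝ x y ⊆ X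

namespace Conf

section Quotient

variable {n : ℕ} {X : Type*} [TopologicalSpace X]

/-- The configuration with its points relabelled by a permutation. -/
def permute (σ : Equiv.Perm (Fin n)) (f : Conf n X) : Conf n X :=
  ⟨f.1 ∘ σ, f.2.comp σ.injective⟩

theorem continuous_permute (σ : Equiv.Perm (Fin n)) :
    Continuous (permute σ : Conf n X → Conf n X) :=
  ((Pi.continuous_precomp σ).comp continuous_subtype_val).subtype_mk _

/-- The unordered configuration underlying an ordered one. -/
def toUConf (f : Conf n X) : UConf n X :=
  Quotient.mk _ f

theorem toUConf_eq_iff {f g : Conf n X} : toUConf f = toUConf g ↔ ∃ σ, permute σ g = f :=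
  Quotient.eq.trans <| exists_congr fun σ ↦
    (Subtype.ext_iff (a1 := f) (a2 := permute σ g)).symm.trans eq_comm

theorem toUConf_permute (σ : Equiv.Perm (Fin n)) (f : Conf n X) :
    toUConf (permute σ f) = toUConf f :=
  toUConf_eq_iff.2 ⟨σ, rfl⟩

theorem continuous_toUConf : Continuous (toUConf : Conf n X → UConf n X) :=
  continuous_quot_mk

theorem isOpenMap_toUConf : IsOpenMap (toUConf : Conf n X → UConf n X) := by
  intro U hU
  refine isQuotientMap_quot_mk.isOpen_preimage.1 ?_
  have saturation : toUConf ⁻¹' (toUConf '' U) = ⋃ σ : Equiv.Perm (Fin n), permute σ ⁻¹' U := by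
    ext f
    simp only [mem_preimage, mem_image, mem_iUnion]
    constructor
    · rintro ⟨g, hg, h⟩
      obtain ⟨σ, rfl⟩ := toUConf_eq_iff.1 h
      exact ⟨σ, hg⟩
    · rintro ⟨σ, hσ⟩
      exact ⟨_, hσ, toUConf_permute σ f⟩
  exact saturation ▸ isOpen_iUnion fun σ ↦ hU.preimage (continuous_permute σ)

end Quotient

section Star

variable {ι : Type*} {n : ℕ} {X : Set (ι → ℝ)}

/-- The family of points of `ℝ^ι` underlying a configuration in a subset of `ℝ^ι`. -/
def coords (f : Conf n X) : Fin n → ι → ℝ :=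
  fun i ↦ f.1 i

theorem coords_injective (f : Conf n X) : Function.Injective (coords f) :=
  Subtype.val_injective.comp f.2

theorem isEmbedding_coords : IsEmbedding (coords : Conf n X → Fin n → ι → ℝ) :=
  (IsEmbedding.piMap fun _ ↦ IsEmbedding.subtypeVal).comp IsEmbedding.subtypeVal

/-- The open star of a configuration: the configurations satisfying every strict
inequality of its order pattern. -/
def openStar (f : Conf n X) : Set (Conf n X) :=
  {g | orderPattern (coords f) ≤ orderPattern (coords g)}

theorem self_mem_openStar (f : Conf n X) : f ∈ openStar f :=
  le_refl (orderPattern (coords f))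

theorem isOpen_openStar [Finite ι] (f : Conf n X) : IsOpen (openStar f) :=
  (isOpen_setOf_orderPattern_le (coords f)).preimage isEmbedding_coords.continuous

theorem coords_image_openStar (f : Conf n X) : coords '' openStar f =
    {w | orderPattern (coords f) ≤ orderPattern w} ∩ univ.pi fun _ ↦ X := by
  ext w
  constructor
  · rintro ⟨g, hg, rfl⟩
    exact ⟨hg, fun i _ ↦ (g.1 i).2⟩
  · rintro ⟨hw, hwX⟩
    have hinj := injective_of_orderPattern_le hw f.coords_injective
    exact ⟨⟨fun i ↦ ⟨w i, hwX i trivial⟩, fun i j h ↦ hinj (congrArg Subtype.val h)⟩, hw, rfl⟩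

theorem starConvex_coords_image_openStar (hX : IsSupportConvex X) (f : Conf n X) :
    StarConvex ℝ (coords f) (coords '' openStar f) := by
  rw [coords_image_openStar, starConvex_iff_segment_subset]
  rintro w ⟨hw, hwX⟩
  refine subset_inter ((convex_setOf_orderPattern_le _).segment_subset f.self_mem_openStar hw) ?_
  intro v hv i _
  have hvi : v i ∈ segment ℝ (coords f i) (w i) := Pi.segment_subset _ _ hv i (mem_univ i)
  exact hX _ (f.1 i).2 _ (hwX i trivial) (fun a ↦ hw.2 i a) hvi

theorem isSimplyConnected_openStar (hX : IsSupportConvex X) (f : Conf n X) :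
    IsSimplyConnected (openStar f) := by
  rw [← isEmbedding_coords.isSimplyConnected_image]
  have : ContractibleSpace (coords '' openStar f) :=
    (starConvex_coords_image_openStar hX f).contractibleSpace ⟨_, f, f.self_mem_openStar, rfl⟩
  exact inferInstanceAs (SimplyConnectedSpace (coords '' openStar f))

theorem injOn_toUConf_openStar (f : Conf n X) : InjOn toUConf (openStar f) := by
  intro g hg g' hg' h
  obtain ⟨σ, rfl⟩ := toUConf_eq_iff.1 h
  obtain rfl := perm_eq_one_of_orderPattern_le f.coords_injective hg' hg
  rfl

theorem isOpen_image_openStar [Finite ι] (f : Conf n X) : IsOpen (toUConf '' openStar f) :=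
  isOpenMap_toUConf _ f.isOpen_openStar

theorem isSimplyConnected_image_openStar [Finite ι] (hX : IsSupportConvex X) (f : Conf n X) :
    IsSimplyConnected (toUConf '' openStar f) :=
  isSimplyConnected_image_of_injOn continuous_toUConf isOpenMap_toUConf f.isOpen_openStar
    f.injOn_toUConf_openStar (isSimplyConnected_openStar hX f)

/-- The order pattern of an unordered configuration: the upper set generated by the patterns of
its orderings, as these depend on the ordering. Upper sets are ordered by reverse inclusion. -/
def unorderedPattern (x : UConf n X) : UpperSet (OrderPattern (Fin n) ι) :=
  upperClosure ((fun f ↦ orderPattern (coords f)) '' (toUConf ⁻¹' {x}))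

theorem unorderedPattern_le_iff (f : Conf n X) (x : UConf n X) :
    unorderedPattern (toUConf f) ≤ unorderedPattern x ↔ x ∈ toUConf '' openStar f := by
  simp only [unorderedPattern, le_upperClosure]
  constructor
  · intro h
    obtain ⟨g, rfl⟩ := Quotient.mk_surjective x
    obtain ⟨_, ⟨f', hf', rfl⟩, hle⟩ := h ⟨g, rfl, rfl⟩
    obtain ⟨σ, rfl⟩ := toUConf_eq_iff.1 hf'.symm
    exact ⟨permute σ g, orderPattern_comp_le hle σ, toUConf_permute σ g⟩
  · rintro ⟨g, hg, rfl⟩ _ ⟨g', hg', rfl⟩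
    obtain ⟨σ, rfl⟩ := toUConf_eq_iff.1 hg'
    exact ⟨_, ⟨permute σ f, toUConf_permute σ f, rfl⟩, orderPattern_comp_le hg σ⟩

end Star

end Conf

theorem braid_group_finitely_presented_general {ι : Type*} [Finite ι] {n : ℕ} {X : Set (ι → ℝ)}
    (hX : IsSupportConvex X) (x : UConf n X) : GroupFP (FundamentalGroup (UConf n X) x) := by
  let p : UConf n X → range (Conf.unorderedPattern (X := X)) := rangeFactorization _
  have : Finite (UpperSet (OrderPattern (Fin n) ι)) :=
    .of_injective _ SetLike.coe_injective
  have star_eq (e : range (Conf.unorderedPattern (n := n) (X := X))) :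
      ∃ f : Conf n X, p ⁻¹' Ici e = Conf.toUConf '' f.openStar := by
    obtain ⟨_, y, rfl⟩ := e
    obtain ⟨f, rfl⟩ := Quotient.mk_surjective y
    exact ⟨f, ext f.unorderedPattern_le_iff⟩
  have hopen (e) : IsOpen (p ⁻¹' Ici e) := by
    obtain ⟨f, hf⟩ := star_eq e
    exact hf ▸ f.isOpen_image_openStar
  have hsc (e) : IsSimplyConnected (p ⁻¹' Ici e) := by
    obtain ⟨f, hf⟩ := star_eq e
    exact hf ▸ f.isSimplyConnected_image_openStar hX
  have := isFinitelyPresented_fundamentalGroup_of_stratification hopen hsc x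
  exact groupFP_of_isFinitelyPresented _

/-! ### Graphs -/

theorem mem_segment_single_iff {ι : Type*} [Fintype ι] [DecidableEq ι] {i j : ι} (hij : i ≠ j)
    {z : ι → ℝ} : z ∈ segment ℝ (Pi.single i 1) (Pi.single j 1) ↔
      z ∈ stdSimplex ℝ ι ∧ ∀ a, 0 < z a → a = i ∨ a = j := by
  constructor
  · intro hz
    refine ⟨segment_single_subset_stdSimplex ℝ i j hz, fun a ha ↦ ?_⟩
    obtain ⟨s, t, -, -, -, rfl⟩ := hz
    by_contra! h
    simp [h.1, h.2] at ha
  · rintro ⟨⟨hz, hsum⟩, hsupp⟩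
    have hzero (a : ι) (ha : ¬ (a = i ∨ a = j)) : z a = 0 :=
      (hz a).eq_of_not_lt' fun h ↦ ha (hsupp a h)
    refine ⟨z i, z j, hz i, hz j, ?_, funext fun a ↦ ?_⟩
    · rw [← hsum, ← Finset.sum_pair hij]
      exact Finset.sum_subset (Finset.subset_univ _) fun a _ ha ↦ hzero a (by simpa using ha)
    · by_cases hai : a = i
      · subst hai; simp [hij]
      · by_cases haj : a = j
        · subst haj; simp [hai]
        · simp [hai, haj, hzero a (by simp [hai, haj])]

theorem isSupportConvex_graphRealization {k : ℕ} (G : SimpleGraph (Fin k)) :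
    IsSupportConvex (graphRealization G) := by
  simp only [IsSupportConvex, graphRealization, mem_iUnion]
  rintro x ⟨i, j, hij, hx⟩ y ⟨i', j', hij', hy⟩ hxy
  have hx' : x ∈ segment ℝ (Pi.single i' 1) (Pi.single j' 1) :=
    (mem_segment_single_iff hij'.ne).2 ⟨((mem_segment_single_iff hij.ne).1 hx).1,
      fun a ha ↦ ((mem_segment_single_iff hij'.ne).1 hy).2 a (hxy a ha)⟩
  refine ((convex_segment _ _).segment_subset hx' hy).trans ?_
  exact fun z hz ↦ mem_iUnion₂.2 ⟨i', j', mem_iUnion.2 ⟨hij', hz⟩⟩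

/-- For `n ≥ 1` and a finite connected graph `G` with at least one edge, the `n`-strand
graph braid group `B_n(|G|)` is finitely presented. -/
theorem braid_group_finitely_presented {k : ℕ} (n : ℕ) (hn : 1 ≤ n)
    (G : SimpleGraph (Fin k)) (hconn : G.Connected) (hedge : G.edgeSet.Nonempty)
    (x : UConf n (graphRealization G)) :
    GroupFP (FundamentalGroup (UConf n (graphRealization G)) x) :=
  braid_group_finitely_presented_general (isSupportConvex_graphRealization G) x
end
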